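/- (Main result: 3D reflection equation) The pair (𝒮, 𝒥) satisfies the Isaev–Kulish 3D reflection equation: on F^{⊗9}, 𝒮₄₅₆ 𝒮₄₈₉ 𝒥₃₅₇₉ 𝒮₂₆₉ 𝒮₂₅₈ 𝒥₁₆₇₈ 𝒥₁₂₃₄ = 𝒥₁₂₃₄ 𝒥₁₆₇₈ 𝒮₂₅₈ 𝒮₂₆₉ 𝒥₃₅₇₉ 𝒮₄₈₉ 𝒮₄₅₆, where 𝒮_{abc} denotes the operator 𝒮 acting on the tensor factors in positions a,b,c and 𝒥_{abcd} denotes the operator 𝒥 acting on the tensor factors in positions a,b,c,d, each acting as the identity on the remaining factors. -/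

import Mathlib

open TensorProduct

noncomputable section

abbrev Fq : Type := RatFunc ℚ

def q : Fq := RatFunc.X

abbrev F : Type := ℕ →₀ Fq

def ket (m : ℕ) : F := Finsupp.single m 1

/-- Linear operator on the Fock space from its action on the basis. -/
def opOf (v : ℕ → F) : F →ₗ[Fq] F := Finsupp.lift F Fq ℕ v

/-- q²-oscillator K -/
def K2 : F →ₗ[Fq] F := opOf fun m => q ^ (2 * m) • ket m
/-- q²-oscillator A⁺ -/
def Ap : F →ₗ[Fq] F := opOf fun m => ket (m + 1)
/-- q²-oscillator A⁻ -/
def Am : F →ₗ[Fq] F := opOf fun m => (1 - q ^ (4 * m)) • ket (m - 1)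
/-- q-oscillator k -/
def kk : F →ₗ[Fq] F := opOf fun m => q ^ m • ket m
/-- q-oscillator a⁺ -/
def ap : F →ₗ[Fq] F := opOf fun m => ket (m + 1)
/-- q-oscillator a⁻ -/
def am : F →ₗ[Fq] F := opOf fun m => (1 - q ^ (2 * m)) • ket (m - 1)

def pi1 (α β μ ν κ σ : Fq) : Matrix (Fin 7) (Fin 7) (F →ₗ[Fq] F) :=
  !![μ • Am, α • K2, 0, 0, 0, 0, 0;
     β • K2, ν • Ap, 0, 0, 0, 0, 0;
     0, 0, κ • LinearMap.id, 0, 0, 0, 0;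
     0, 0, 0, σ • LinearMap.id, 0, 0, 0;
     0, 0, 0, 0, κ⁻¹ • LinearMap.id, 0, 0;
     0, 0, 0, 0, 0, ν⁻¹ • Am, (q ^ 2 * β⁻¹) • K2;
     0, 0, 0, 0, 0, (q ^ 2 * α⁻¹) • K2, μ⁻¹ • Ap]

def pi2 (α β μ ν κ σ : Fq) : Matrix (Fin 7) (Fin 7) (F →ₗ[Fq] F) :=
  !![κ • LinearMap.id, 0, 0, 0, 0, 0, 0;
     0, μ • Am, α • K2, 0, 0, 0, 0;
     0, β • K2, ν • Ap, 0, 0, 0, 0;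
     0, 0, 0, σ • LinearMap.id, 0, 0, 0;
     0, 0, 0, 0, ν⁻¹ • Am, (q ^ 2 * β⁻¹) • K2, 0;
     0, 0, 0, 0, (q ^ 2 * α⁻¹) • K2, μ⁻¹ • Ap, 0;
     0, 0, 0, 0, 0, 0, κ⁻¹ • LinearMap.id]

def pi3 (α μ κa κb : Fq) : Matrix (Fin 7) (Fin 7) (F →ₗ[Fq] F) :=
  !![κa • LinearMap.id, 0, 0, 0, 0, 0, 0;
     0, κb • LinearMap.id, 0, 0, 0, 0, 0;
     0, 0, μ • (am ∘ₗ am), α • (kk ∘ₗ am), (-((1 + q ^ 2) * μ)⁻¹ * α ^ 2) • (kk ∘ₗ kk), 0, 0;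
     0, 0, (-(1 + q ^ 2) * α⁻¹ * μ) • (am ∘ₗ kk), am ∘ₗ ap - kk ∘ₗ kk, (-(q * μ)⁻¹ * α) • (kk ∘ₗ ap), 0, 0;
     0, 0, (-(1 + q ^ 2) * q ^ 2 * α⁻¹ ^ 2 * μ) • (kk ∘ₗ kk), ((1 + q ^ 2) * α⁻¹) • (kk ∘ₗ ap), μ⁻¹ • (ap ∘ₗ ap), 0, 0;
     0, 0, 0, 0, 0, κb⁻¹ • LinearMap.id, 0;
     0, 0, 0, 0, 0, 0, κa⁻¹ • LinearMap.id]

def rhoB : Fin 7 → ℤ := ![5, 3, 1, 0, -1, -3, -5]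

def CB : Matrix (Fin 7) (Fin 7) Fq := fun i j => if (i : ℕ) + (j : ℕ) = 6 then q ^ rhoB j else 0

/-- `(p)_n` for an integer `n`: `∏_{l=1}^{n}(1-p^l)` if `n ≥ 0`, and `0` if `n < 0`
(the latter convention makes the q-multinomial bracket below vanish, via multiplication
for a numerator index and via division by zero for a denominator index, whenever some
index is negative, as required). -/
def qfac (p : Fq) (n : ℤ) : Fq :=
  if 0 ≤ n then ∏ l ∈ Finset.range n.toNat, (1 - p ^ (l + 1)) else 0

/-- The matrix element 𝒮^{abc}_{ijk} (with λ = b - μ in the sum over λ + μ = b). -/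
def Scoef (a b c i j k : ℕ) : Fq :=
  (if i + j = a + b then 1 else 0) * (if j + k = b + c then 1 else 0) *
    ∑ μ ∈ Finset.range (b + 1),
      (-1 : Fq) ^ (b - μ) *
        q ^ (2 * (i : ℤ) * ((c : ℤ) - (j : ℤ)) + 2 * ((k : ℤ) + 1) * ((b : ℤ) - (μ : ℤ))
          + 2 * (μ : ℤ) * ((μ : ℤ) - (k : ℤ))) *
        ((qfac (q ^ 4) (i : ℤ) * qfac (q ^ 4) (j : ℤ) * qfac (q ^ 4) ((c : ℤ) + (μ : ℤ))) /
          (qfac (q ^ 4) (μ : ℤ) * qfac (q ^ 4) ((b : ℤ) - (μ : ℤ)) *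
            qfac (q ^ 4) ((i : ℤ) - (μ : ℤ)) * qfac (q ^ 4) ((j : ℤ) - ((b : ℤ) - (μ : ℤ))) *
            qfac (q ^ 4) (c : ℤ)))

/-- STATEMENT SETUP (fixed parameter choice κ₂ = σ₂ = 1, μ₂ = ν₂ = 1, α₂β₂ = -q²,
κ₃₁ = κ₃₂ = 1, μ₃ = 1): the hypotheses on the normalized bijective intertwiner Ξ. -/
def IsNormalizedIntertwiner (α₂ β₂ α₃ : Fq)
    (Ξ : F ⊗[Fq] (F ⊗[Fq] (F ⊗[Fq] F)) →ₗ[Fq] F ⊗[Fq] (F ⊗[Fq] (F ⊗[Fq] F))) : Prop :=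
  Function.Bijective Ξ ∧
  Ξ (ket 0 ⊗ₜ[Fq] (ket 0 ⊗ₜ[Fq] (ket 0 ⊗ₜ[Fq] ket 0)))
    = ket 0 ⊗ₜ[Fq] (ket 0 ⊗ₜ[Fq] (ket 0 ⊗ₜ[Fq] ket 0)) ∧
  ∀ I J : Fin 7,
    (∑ K : Fin 7, ∑ L : Fin 7, ∑ M : Fin 7,
        TensorProduct.map (pi3 α₃ 1 1 1 I K)
          (TensorProduct.map (pi2 α₂ β₂ 1 1 1 1 K L)
            (TensorProduct.map (pi3 α₃ 1 1 1 L M) (pi2 α₂ β₂ 1 1 1 1 M J)))) ∘ₗ Ξ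
      = Ξ ∘ₗ (∑ K : Fin 7, ∑ L : Fin 7, ∑ M : Fin 7,
          TensorProduct.map (pi2 α₂ β₂ 1 1 1 1 I K)
            (TensorProduct.map (pi3 α₃ 1 1 1 K L)
              (TensorProduct.map (pi2 α₂ β₂ 1 1 1 1 L M) (pi3 α₃ 1 1 1 M J))))

/-- F^{⊗9}, identified with `(Fin 9 → ℕ) →₀ Fq` via its standard basis
|m₁⟩⊗⋯⊗|m₉⟩ ↔ single (m₁,…,m₉). -/
abbrev W9 : Type := (Fin 9 → ℕ) →₀ Fq

def upd3' (f : Fin 9 → ℕ) (p1 p2 p3 : Fin 9) (a b c : ℕ) : Fin 9 → ℕ :=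
  Function.update (Function.update (Function.update f p1 a) p2 b) p3 c

def upd4' (f : Fin 9 → ℕ) (p1 p2 p3 p4 : Fin 9) (a b c d : ℕ) : Fin 9 → ℕ :=
  Function.update (Function.update (Function.update (Function.update f p1 a) p2 b) p3 c) p4 d

/-- The operator 𝒮 acting on the tensor factors in positions p1, p2, p3 of F^{⊗9}
and as the identity on the other factors. -/
def S9 (p1 p2 p3 : Fin 9) : W9 →ₗ[Fq] W9 :=
  Finsupp.lift W9 Fq (Fin 9 → ℕ) fun f =>
    ∑ᶠ a : ℕ, ∑ᶠ b : ℕ, ∑ᶠ c : ℕ,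
      Scoef a b c (f p1) (f p2) (f p3) • Finsupp.single (upd3' f p1 p2 p3 a b c) 1

/-- The operator 𝒥 (with matrix elements Jc) acting on the tensor factors in positions
p1, p2, p3, p4 of F^{⊗9} and as the identity on the other factors. -/
def J9 (Jc : ℕ → ℕ → ℕ → ℕ → ℕ → ℕ → ℕ → ℕ → Fq) (p1 p2 p3 p4 : Fin 9) : W9 →ₗ[Fq] W9 :=
  Finsupp.lift W9 Fq (Fin 9 → ℕ) fun f =>
    ∑ᶠ a : ℕ, ∑ᶠ b : ℕ, ∑ᶠ c : ℕ, ∑ᶠ d : ℕ,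
      Jc a b c d (f p1) (f p2) (f p3) (f p4) • Finsupp.single (upd4' f p1 p2 p3 p4 a b c d) 1

open Finsupp (single lmapDomain)

/-!
Let `w` be a reduced word of the longest element of the Weyl group of type `B₃`, and attach to it
the matrix of operators on nine Fock spaces obtained by multiplying the matrices of the fundamental
representations along `w`. The operator `𝒮` intertwines the matrices of `s₁s₂s₁` and `s₂s₁s₂`, and
`𝒥` those of `s₃s₂s₃s₂` and `s₂s₃s₂s₃`, so each side of the 3D reflection equation follows a chain
of braid moves from one reduced word to the reversed one, and both sides intertwine the same two
matrices. Both fix the vacuum, and the vacuum generates the whole space under the entries of the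
matrix of the source word; hence the two sides agree.
-/

/-- A tensor factor of a free module, at the level of bases: `D` indexes a basis of the factor and
`C` a basis of the whole space, `read` is the component of a configuration in the factor and
`write` overwrites that component. -/
structure Subsystem (C D : Type*) where
  read : C → D
  write : D → C → C
  read_write (d c) : read (write d c) = d
  write_read (c) : write (read c) c = c
  write_write (d d' c) : write d (write d' c) = write d c

namespace Subsystem

variable {R C D E : Type*} [CommSemiring R]

/-- The linear map underlying `Subsystem.op`. -/
def opLin (L : Subsystem C D) :
    Module.End R (D →₀ R) →ₗ[R] Module.End R (C →₀ R) where
  toFun X := Finsupp.lift _ R C fun c => lmapDomain R R (L.write · c) (X (single (L.read c) 1))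
  map_add' X Y := by ext1; apply LinearMap.ext_ring; simp [Finsupp.mapDomain_add]
  map_smul' a X := by ext1; apply LinearMap.ext_ring; simp

theorem opLin_single (L : Subsystem C D) (X : Module.End R (D →₀ R)) (c : C) :
    L.opLin X (single c 1) = lmapDomain R R (L.write · c) (X (single (L.read c) 1)) := by
  simp [opLin]

theorem opLin_comp_write (L : Subsystem C D) (X : Module.End R (D →₀ R)) (c : C) :
    L.opLin X ∘ₗ lmapDomain R R (L.write · c) = lmapDomain R R (L.write · c) ∘ₗ X := by
  ext1 d
  apply LinearMap.ext_ring
  simp [Finsupp.mapDomain_single, opLin_single, L.read_write, L.write_write]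

/-- The operator acting as `X` on the factor and as the identity on its complement. -/
def op (L : Subsystem C D) : Module.End R (D →₀ R) →ₐ[R] Module.End R (C →₀ R) :=
  AlgHom.ofLinearMap L.opLin
    (by
      ext1 c
      apply LinearMap.ext_ring
      simp [opLin_single, Finsupp.mapDomain_single, L.write_read])
    (fun X Y => by
      ext1 c
      apply LinearMap.ext_ring
      simpa [opLin_single] using
        (LinearMap.congr_fun (L.opLin_comp_write X c) (Y (single (L.read c) 1))).symm)

theorem op_single (L : Subsystem C D) (X : Module.End R (D →₀ R)) (c : C) :
    L.op X (single c 1) = lmapDomain R R (L.write · c) (X (single (L.read c) 1)) :=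
  L.opLin_single X c

/-- A factor of a factor. -/
@[simps]
def trans (L : Subsystem C D) (M : Subsystem D E) : Subsystem C E where
  read c := M.read (L.read c)
  write e c := L.write (M.write e (L.read c)) c
  read_write e c := by rw [L.read_write, M.read_write]
  write_read c := by rw [M.write_read, L.write_read]
  write_write e e' c := by rw [L.read_write, L.write_write, M.write_write]

theorem op_op (L : Subsystem C D) (M : Subsystem D E) (X : Module.End R (E →₀ R)) :
    L.op (M.op X) = (L.trans M).op X := by
  ext1 c
  apply LinearMap.ext_ring
  simp [op_single, ← Finsupp.mapDomain_comp, Function.comp_def]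

theorem commute_op_op {L : Subsystem C D} {M : Subsystem C E}
    (h : ∀ d e c, L.write d (M.write e c) = M.write e (L.write d c))
    (X : Module.End R (D →₀ R)) (Y : Module.End R (E →₀ R)) : Commute (L.op X) (M.op Y) := by
  have read_left (e c) : L.read (M.write e c) = L.read c := by
    conv_lhs => rw [← L.write_read c, ← h, L.read_write]
  have read_right (d c) : M.read (L.write d c) = M.read c := by
    conv_lhs => rw [← M.write_read c, h, M.read_write]
  have left (c : C) : L.op X ∘ₗ lmapDomain R R (M.write · c) = Finsupp.lift _ R E fun e =>
      lmapDomain R R (fun d => L.write d (M.write e c)) (X (single (L.read c) 1)) := by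
    ext1 e
    apply LinearMap.ext_ring
    simp [Finsupp.mapDomain_single, op_single, read_left]
  have right (c : C) : M.op Y ∘ₗ lmapDomain R R (L.write · c) = Finsupp.lift _ R D fun d =>
      lmapDomain R R (fun e => M.write e (L.write d c)) (Y (single (M.read c) 1)) := by
    ext1 d
    apply LinearMap.ext_ring
    simp [Finsupp.mapDomain_single, op_single, read_right]
  ext1 c
  apply LinearMap.ext_ring
  have hl := LinearMap.congr_fun (left c) (Y (single (M.read c) 1))
  have hr := LinearMap.congr_fun (right c) (X (single (L.read c) 1))
  simp only [LinearMap.comp_apply, Module.End.mul_apply, Finsupp.lsingle_apply, op_single]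
    at hl hr ⊢
  rw [hl, hr]
  simp only [Finsupp.lift_apply, Finsupp.lmapDomain_apply, Finsupp.mapDomain, Finsupp.smul_sum,
    h, Finsupp.smul_single, smul_eq_mul]
  rw [Finsupp.sum_comm]
  simp only [mul_comm]

variable {ι κ σ : Type*}

/-- The tensor factor at position `p` of a tensor power. -/
@[simps]
def site [DecidableEq ι] (σ : Type*) (p : ι) : Subsystem (ι → σ) σ where
  read f := f p
  write a f := Function.update f p a
  read_write a f := Function.update_self p a f
  write_read f := Function.update_eq_self p f
  write_write a b f := Function.update_idem b a f

/-- The tensor factors at the positions `e i`, in this order. -/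
@[simps]
def sites (σ : Type*) (e : κ ↪ ι) : Subsystem (ι → σ) (κ → σ) where
  read f := f ∘ e
  write g f := Function.extend e g f
  read_write g f := Function.extend_comp e.injective g f
  write_read f := by
    ext p
    by_cases h : ∃ i, e i = p
    · obtain ⟨i, rfl⟩ := h
      simp [e.injective.extend_apply]
    · simp [Function.extend_apply' _ _ _ h]
  write_write g g' f := by
    ext p
    by_cases h : ∃ i, e i = p
    · obtain ⟨i, rfl⟩ := h
      simp [e.injective.extend_apply]
    · simp [Function.extend_apply' _ _ _ h]

theorem sites_trans_site [DecidableEq ι] [DecidableEq κ] (e : κ ↪ ι) (i : κ) :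
    (sites σ e).trans (site σ i) = site σ (e i) := by
  simp only [trans, sites, site, mk.injEq, Function.comp_apply, true_and]
  funext a f p
  by_cases h : ∃ i, e i = p
  · obtain ⟨j, rfl⟩ := h
    simp [e.injective.extend_apply, Function.update_apply]
  · rw [Function.extend_apply' _ _ _ h, Function.update_of_ne]
    rintro rfl
    exact h ⟨i, rfl⟩

theorem commute_site_site [DecidableEq ι] {p r : ι} (h : p ≠ r) (X Y : Module.End R (σ →₀ R)) :
    Commute ((site σ p).op X) ((site σ r).op Y) := by
  refine commute_op_op (fun a b f => ?_) X Y
  exact Function.update_comm h.symm b a f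

theorem commute_sites_site [DecidableEq ι] {e : κ ↪ ι} {p : ι} (h : ∀ i, e i ≠ p)
    (X : Module.End R ((κ → σ) →₀ R)) (Y : Module.End R (σ →₀ R)) :
    Commute ((sites σ e).op X) ((site σ p).op Y) := by
  refine commute_op_op (fun g a f => ?_) X Y
  funext r
  obtain rfl | hr := eq_or_ne r p
  · simp [h]
  · by_cases hi : ∃ i, e i = r
    · obtain ⟨i, rfl⟩ := hi
      simp [e.injective.extend_apply, hr]
    · simp [Function.extend_apply' _ _ _ hi, hr]

end Subsystem

section Words

/-- `X` turns the matrix `N` of operators into `M`: entrywise, `M * X = X * N`. -/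
def Intertwines {m A : Type*} [Mul A] (X : A) (M N : Matrix m m A) : Prop :=
  ∀ i j, SemiconjBy X (N i j) (M i j)

namespace Intertwines

variable {m A B : Type*} [Semiring A] [Semiring B] {X Y : A} {L M N L' M' : Matrix m m A}

theorem trans (h : Intertwines X L M) (h' : Intertwines Y M N) : Intertwines (X * Y) L N :=
  fun i j => (h i j).mul_left (h' i j)

instance : Trans (Intertwines (m := m) X) (Intertwines Y) (Intertwines (X * Y)) := ⟨trans⟩

theorem mul [Fintype m] (h : Intertwines X L M) (h' : Intertwines X L' M') :
    Intertwines X (L * L') (M * M') := fun i j => by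
  simp only [SemiconjBy, Matrix.mul_apply, Finset.mul_sum, Finset.sum_mul]
  exact Finset.sum_congr rfl fun k _ => (h i k).mul_right (h' k j)

theorem one [DecidableEq m] (X : A) : Intertwines X (1 : Matrix m m A) 1 := fun i j => by
  obtain rfl | h := eq_or_ne i j
  · simp
  · simp [h]

theorem map {G : Type*} [FunLike G A B] [RingHomClass G A B] (h : Intertwines X L M) (f : G) :
    Intertwines (f X) (L.map f) (M.map f) := fun i j => (h i j).map f

end Intertwines

variable {R ι κ ν σ m : Type*} [CommSemiring R] [Fintype m] [DecidableEq m] [DecidableEq ι]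

/-- The product of the matrices `T k`, each acting on the tensor factor `p`, over the letters
`(k, p)` of a word. -/
def word (T : κ → Matrix m m (Module.End R (σ →₀ R))) (w : List (κ × ι)) :
    Matrix m m (Module.End R ((ι → σ) →₀ R)) :=
  (w.map fun x => (T x.1).map (Subsystem.site σ x.2).op).prod

variable (T : κ → Matrix m m (Module.End R (σ →₀ R)))

@[simp]
theorem word_nil : word T ([] : List (κ × ι)) = 1 := rfl

@[simp]
theorem word_cons (x : κ × ι) (w : List (κ × ι)) :
    word T (x :: w) = (T x.1).map (Subsystem.site σ x.2).op * word T w := by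
  simp [word]

@[simp]
theorem word_append (u v : List (κ × ι)) : word T (u ++ v) = word T u * word T v := by
  simp [word]

variable {T}

theorem word_map_sites [DecidableEq ν] (e : ν ↪ ι) (w : List (κ × ν)) :
    (word T w).map (Subsystem.sites σ e).op = word T (w.map (Prod.map id e)) := by
  induction w with
  | nil => exact Matrix.map_one _ (map_zero _) (map_one _)
  | cons x w ih =>
    rw [List.map_cons, word_cons, word_cons, ← ih, Matrix.map_mul, Matrix.map_map]
    congr 2
    ext1 Y
    simp [Subsystem.op_op, Subsystem.sites_trans_site]

theorem intertwines_word_self {X : Module.End R ((ι → σ) →₀ R)} {w : List (κ × ι)}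
    (h : ∀ x ∈ w, ∀ Y, Commute X ((Subsystem.site σ x.2).op Y)) :
    Intertwines X (word T w) (word T w) := by
  induction w with
  | nil => exact .one _
  | cons x w ih =>
    rw [List.forall_mem_cons] at h
    rw [word_cons]
    exact .mul (fun i j => h.1 _) (ih h.2)

theorem Intertwines.at_sites [DecidableEq ν] {X : Module.End R ((ν → σ) →₀ R)}
    {w w' : List (κ × ν)} (h : Intertwines X (word T w) (word T w')) (e : ν ↪ ι)
    {W W' : List (κ × ι)} (u v : List (κ × ι)) (hW : W = u ++ w.map (Prod.map id e) ++ v)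
    (hW' : W' = u ++ w'.map (Prod.map id e) ++ v) (huv : ∀ x ∈ u ++ v, ∀ i, e i ≠ x.2) :
    Intertwines ((Subsystem.sites σ e).op X) (word T W) (word T W') := by
  rw [List.forall_mem_append] at huv
  simp only [hW, hW', word_append, ← word_map_sites]
  refine (Intertwines.mul ?_ (h.map _)).mul ?_ <;> refine intertwines_word_self fun x hx Y => ?_
  · exact Subsystem.commute_sites_site (huv.1 x hx) X Y
  · exact Subsystem.commute_sites_site (huv.2 x hx) X Y

/-- The operator `X` on `n` factors acting on the factors at the listed positions. -/
abbrev atPos {n : ℕ} (X : Module.End R ((Fin n → σ) →₀ R)) (p : Fin n → ι)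
    (hp : p.Injective := by decide) : Module.End R ((ι → σ) →₀ R) :=
  (Subsystem.sites σ ⟨p, hp⟩).op X

end Words

section ReflectionChains

/-- The letter for the first simple reflection of type `B₃`, placed at tensor position `p`. -/
abbrev s₁ (p : Fin 9) : Fin 3 × Fin 9 := (0, p)

/-- The letter for the second simple reflection of type `B₃`, placed at tensor position `p`. -/
abbrev s₂ (p : Fin 9) : Fin 3 × Fin 9 := (1, p)

/-- The letter for the third simple reflection of type `B₃`, placed at tensor position `p`. -/
abbrev s₃ (p : Fin 9) : Fin 3 × Fin 9 := (2, p)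

variable {R σ m : Type*} [CommSemiring R] [Fintype m] [DecidableEq m]
  {T : Fin 3 → Matrix m m (Module.End R (σ →₀ R))} {S : Module.End R ((Fin 3 → σ) →₀ R)}
  {J : Module.End R ((Fin 4 → σ) →₀ R)}

/-- `S` and `J` realize the braid relations of type `B₃` for the matrices `T`. -/
structure RealizesBraidRelations (T : Fin 3 → Matrix m m (Module.End R (σ →₀ R)))
    (S : Module.End R ((Fin 3 → σ) →₀ R)) (J : Module.End R ((Fin 4 → σ) →₀ R)) : Prop where
  commute (p r : Fin 9) : word T [s₁ p, s₃ r] = word T [s₃ r, s₁ p]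
  braid₁₂ : Intertwines S (word T [(0, 0), (1, 1), (0, 2)]) (word T [(1, 2), (0, 1), (1, 0)])
  braid₂₁ : Intertwines S (word T [(1, 0), (0, 1), (1, 2)]) (word T [(0, 2), (1, 1), (0, 0)])
  braid₃₂ : Intertwines J (word T [(2, 0), (1, 1), (2, 2), (1, 3)])
    (word T [(1, 3), (2, 2), (1, 1), (2, 0)])

namespace RealizesBraidRelations

theorem swap (h : RealizesBraidRelations T S J) {p r : Fin 9} (u v : List (Fin 3 × Fin 9))
    {W W' : List (Fin 3 × Fin 9)} (hW : W = u ++ s₁ p :: s₃ r :: v)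
    (hW' : W' = u ++ s₃ r :: s₁ p :: v) : word T W = word T W' := by
  have huv := congrArg (fun N => word T u * N * word T v) (h.commute p r)
  simpa [hW, hW', mul_assoc] using huv

theorem intertwines_left (h : RealizesBraidRelations T S J) :
    Intertwines
      (atPos S ![3, 4, 5] * atPos S ![3, 7, 8] * atPos J ![2, 4, 6, 8] * atPos S ![1, 5, 8] *
        atPos S ![1, 4, 7] * atPos J ![0, 5, 6, 7] * atPos J ![0, 1, 2, 3])
      (word T [s₃ 0, s₂ 1, s₃ 2, s₂ 3, s₁ 4, s₂ 5, s₃ 6, s₂ 7, s₁ 8])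
      (word T [s₁ 8, s₂ 7, s₃ 6, s₂ 5, s₁ 4, s₂ 3, s₃ 2, s₂ 1, s₃ 0]) :=
  calc
    Intertwines (atPos S ![3, 4, 5])
        (word T [s₃ 0, s₂ 1, s₃ 2, s₂ 3, s₁ 4, s₂ 5, s₃ 6, s₂ 7, s₁ 8])
        (word T [s₃ 0, s₂ 1, s₃ 2, s₁ 5, s₂ 4, s₁ 3, s₃ 6, s₂ 7, s₁ 8]) :=
      h.braid₂₁.at_sites _ [_, _, _] _ rfl rfl (by decide)
    _ = word T [s₃ 0, s₂ 1, s₃ 2, s₁ 5, s₂ 4, s₃ 6, s₁ 3, s₂ 7, s₁ 8] :=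
        h.swap [_, _, _, _, _] _ rfl rfl
    Intertwines (atPos S ![3, 7, 8]) _
        (word T [s₃ 0, s₂ 1, s₃ 2, s₁ 5, s₂ 4, s₃ 6, s₂ 8, s₁ 7, s₂ 3]) :=
      h.braid₁₂.at_sites _ [_, _, _, _, _, _] _ rfl rfl (by decide)
    _ = word T [s₃ 0, s₂ 1, s₁ 5, s₃ 2, s₂ 4, s₃ 6, s₂ 8, s₁ 7, s₂ 3] :=
        (h.swap [_, _] _ rfl rfl).symm
    Intertwines (atPos J ![2, 4, 6, 8]) _
        (word T [s₃ 0, s₂ 1, s₁ 5, s₂ 8, s₃ 6, s₂ 4, s₃ 2, s₁ 7, s₂ 3]) :=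
      h.braid₃₂.at_sites _ [_, _, _] _ rfl rfl (by decide)
    Intertwines (atPos S ![1, 5, 8]) _
        (word T [s₃ 0, s₁ 8, s₂ 5, s₁ 1, s₃ 6, s₂ 4, s₃ 2, s₁ 7, s₂ 3]) :=
      h.braid₂₁.at_sites _ [_] _ rfl rfl (by decide)
    _ = word T [s₁ 8, s₃ 0, s₂ 5, s₁ 1, s₃ 6, s₂ 4, s₃ 2, s₁ 7, s₂ 3] :=
        (h.swap [] _ rfl rfl).symm
    _ = word T [s₁ 8, s₃ 0, s₂ 5, s₃ 6, s₁ 1, s₂ 4, s₃ 2, s₁ 7, s₂ 3] :=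
        h.swap [_, _, _] _ rfl rfl
    _ = word T [s₁ 8, s₃ 0, s₂ 5, s₃ 6, s₁ 1, s₂ 4, s₁ 7, s₃ 2, s₂ 3] :=
        (h.swap [_, _, _, _, _, _] _ rfl rfl).symm
    Intertwines (atPos S ![1, 4, 7]) _
        (word T [s₁ 8, s₃ 0, s₂ 5, s₃ 6, s₂ 7, s₁ 4, s₂ 1, s₃ 2, s₂ 3]) :=
      h.braid₁₂.at_sites _ [_, _, _, _] _ rfl rfl (by decide)
    Intertwines (atPos J ![0, 5, 6, 7]) _
        (word T [s₁ 8, s₂ 7, s₃ 6, s₂ 5, s₃ 0, s₁ 4, s₂ 1, s₃ 2, s₂ 3]) :=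
      h.braid₃₂.at_sites _ [_] _ rfl rfl (by decide)
    _ = word T [s₁ 8, s₂ 7, s₃ 6, s₂ 5, s₁ 4, s₃ 0, s₂ 1, s₃ 2, s₂ 3] :=
        (h.swap [_, _, _, _] _ rfl rfl).symm
    Intertwines (atPos J ![0, 1, 2, 3]) _
        (word T [s₁ 8, s₂ 7, s₃ 6, s₂ 5, s₁ 4, s₂ 3, s₃ 2, s₂ 1, s₃ 0]) :=
      h.braid₃₂.at_sites _ [_, _, _, _, _] _ rfl rfl (by decide)

theorem intertwines_right (h : RealizesBraidRelations T S J) :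
    Intertwines
      (atPos J ![0, 1, 2, 3] * atPos J ![0, 5, 6, 7] * atPos S ![1, 4, 7] * atPos S ![1, 5, 8] *
        atPos J ![2, 4, 6, 8] * atPos S ![3, 7, 8] * atPos S ![3, 4, 5])
      (word T [s₃ 0, s₂ 1, s₃ 2, s₂ 3, s₁ 4, s₂ 5, s₃ 6, s₂ 7, s₁ 8])
      (word T [s₁ 8, s₂ 7, s₃ 6, s₂ 5, s₁ 4, s₂ 3, s₃ 2, s₂ 1, s₃ 0]) :=
  calc
    Intertwines (atPos J ![0, 1, 2, 3])
        (word T [s₃ 0, s₂ 1, s₃ 2, s₂ 3, s₁ 4, s₂ 5, s₃ 6, s₂ 7, s₁ 8])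
        (word T [s₂ 3, s₃ 2, s₂ 1, s₃ 0, s₁ 4, s₂ 5, s₃ 6, s₂ 7, s₁ 8]) :=
      h.braid₃₂.at_sites _ [] _ rfl rfl (by decide)
    _ = word T [s₂ 3, s₃ 2, s₂ 1, s₁ 4, s₃ 0, s₂ 5, s₃ 6, s₂ 7, s₁ 8] :=
        (h.swap [_, _, _] _ rfl rfl).symm
    Intertwines (atPos J ![0, 5, 6, 7]) _
        (word T [s₂ 3, s₃ 2, s₂ 1, s₁ 4, s₂ 7, s₃ 6, s₂ 5, s₃ 0, s₁ 8]) :=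
      h.braid₃₂.at_sites _ [_, _, _, _] _ rfl rfl (by decide)
    _ = word T [s₂ 3, s₃ 2, s₂ 1, s₁ 4, s₂ 7, s₃ 6, s₂ 5, s₁ 8, s₃ 0] :=
        (h.swap [_, _, _, _, _, _, _] _ rfl rfl).symm
    Intertwines (atPos S ![1, 4, 7]) _
        (word T [s₂ 3, s₃ 2, s₁ 7, s₂ 4, s₁ 1, s₃ 6, s₂ 5, s₁ 8, s₃ 0]) :=
      h.braid₂₁.at_sites _ [_, _] _ rfl rfl (by decide)
    _ = word T [s₂ 3, s₁ 7, s₃ 2, s₂ 4, s₁ 1, s₃ 6, s₂ 5, s₁ 8, s₃ 0] :=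
        (h.swap [_] _ rfl rfl).symm
    _ = word T [s₂ 3, s₁ 7, s₃ 2, s₂ 4, s₃ 6, s₁ 1, s₂ 5, s₁ 8, s₃ 0] :=
        h.swap [_, _, _, _] _ rfl rfl
    Intertwines (atPos S ![1, 5, 8]) _
        (word T [s₂ 3, s₁ 7, s₃ 2, s₂ 4, s₃ 6, s₂ 8, s₁ 5, s₂ 1, s₃ 0]) :=
      h.braid₁₂.at_sites _ [_, _, _, _, _] _ rfl rfl (by decide)
    Intertwines (atPos J ![2, 4, 6, 8]) _
        (word T [s₂ 3, s₁ 7, s₂ 8, s₃ 6, s₂ 4, s₃ 2, s₁ 5, s₂ 1, s₃ 0]) :=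
      h.braid₃₂.at_sites _ [_, _] _ rfl rfl (by decide)
    _ = word T [s₂ 3, s₁ 7, s₂ 8, s₃ 6, s₂ 4, s₁ 5, s₃ 2, s₂ 1, s₃ 0] :=
        (h.swap [_, _, _, _, _] _ rfl rfl).symm
    Intertwines (atPos S ![3, 7, 8]) _
        (word T [s₁ 8, s₂ 7, s₁ 3, s₃ 6, s₂ 4, s₁ 5, s₃ 2, s₂ 1, s₃ 0]) :=
      h.braid₂₁.at_sites _ [] _ rfl rfl (by decide)
    _ = word T [s₁ 8, s₂ 7, s₃ 6, s₁ 3, s₂ 4, s₁ 5, s₃ 2, s₂ 1, s₃ 0] :=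
        h.swap [_, _] _ rfl rfl
    Intertwines (atPos S ![3, 4, 5]) _
        (word T [s₁ 8, s₂ 7, s₃ 6, s₂ 5, s₁ 4, s₂ 3, s₃ 2, s₂ 1, s₃ 0]) :=
      h.braid₁₂.at_sites _ [_, _, _] _ rfl rfl (by decide)

end RealizesBraidRelations

end ReflectionChains

section GaussianBinomials

variable {R A : Type*} [CommRing R] [Ring A] [Algebra R A] (s : R)

/-- The Gaussian binomial coefficient `[n, l]_s`, by the `q`-Pascal rule. -/
def gaussBinom : ℕ → ℕ → R
  | _, 0 => 1
  | 0, _ + 1 => 0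
  | n + 1, l + 1 => gaussBinom n l + s ^ (l + 1) * gaussBinom n (l + 1)

theorem gaussBinom_zero_right (n : ℕ) : gaussBinom s n 0 = 1 := by cases n <;> rfl

theorem gaussBinom_succ_succ (n l : ℕ) :
    gaussBinom s (n + 1) (l + 1) = gaussBinom s n l + s ^ (l + 1) * gaussBinom s n (l + 1) := rfl

theorem gaussBinom_eq_zero_of_lt {n l : ℕ} (h : n < l) : gaussBinom s n l = 0 := by
  induction n generalizing l with
  | zero => obtain ⟨l, rfl⟩ := Nat.exists_eq_succ_of_ne_zero h.ne'; rfl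
  | succ n ih =>
    obtain ⟨l, rfl⟩ := Nat.exists_eq_succ_of_ne_zero (Nat.ne_zero_of_lt h)
    rw [Nat.succ_eq_add_one, gaussBinom_succ_succ, ih (by lia), ih (by lia)]
    simp

/-- The `q`-Pochhammer symbol `(s)_n = (1 - s)(1 - s²)⋯(1 - sⁿ)`. -/
def qPoch (n : ℕ) : R := ∏ l ∈ Finset.range n, (1 - s ^ (l + 1))

theorem qPoch_succ (n : ℕ) : qPoch s (n + 1) = qPoch s n * (1 - s ^ (n + 1)) :=
  Finset.prod_range_succ _ n

theorem one_sub_pow_mul_gaussBinom_succ_succ (n l : ℕ) :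
    (1 - s ^ (l + 1)) * gaussBinom s (n + 1) (l + 1) = (1 - s ^ (n + 1)) * gaussBinom s n l := by
  induction n generalizing l with
  | zero =>
    rw [gaussBinom_succ_succ, gaussBinom_eq_zero_of_lt s l.succ_pos]
    cases l with
    | zero => simp
    | succ l => simp [gaussBinom_eq_zero_of_lt s l.succ_pos]
  | succ n ih =>
    rw [gaussBinom_succ_succ]
    cases l with
    | zero =>
      have h := ih 0
      rw [gaussBinom_zero_right] at h ⊢
      linear_combination s * h
    | succ l =>
      linear_combination s ^ (l + 2) * ih (l + 1) + s * ih l -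
        (1 - s ^ (n + 1)) * s * gaussBinom_succ_succ s n l

theorem gaussBinom_mul_qPoch_mul_qPoch (l m : ℕ) :
    gaussBinom s (l + m) l * (qPoch s l * qPoch s m) = qPoch s (l + m) := by
  induction l with
  | zero => simp [gaussBinom_zero_right, qPoch]
  | succ l ih =>
    have h := one_sub_pow_mul_gaussBinom_succ_succ s (l + m) l
    rw [add_right_comm, qPoch_succ, qPoch_succ]
    linear_combination qPoch s l * qPoch s m * h + (1 - s ^ (l + m + 1)) * ih

open Finset in
theorem add_pow_of_mul_eq_smul_mul {s : R} {x y : A} (h : x * y = s • (y * x)) (n : ℕ) :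
    (x + y) ^ n =
      ∑ lm ∈ antidiagonal n, gaussBinom s n lm.1 • (y ^ lm.2 * x ^ lm.1) := by
  have hpow (l : ℕ) : x ^ l * y = s ^ l • (y * x ^ l) := by
    induction l with
    | zero => simp
    | succ l ih => rw [pow_succ', mul_assoc, ih, mul_smul_comm, ← mul_assoc, h, smul_mul_assoc,
        smul_smul, mul_assoc, pow_succ]
  induction n with
  | zero => simp [gaussBinom_zero_right]
  | succ n ih =>
    have shift : ∑ lm ∈ antidiagonal n, (s ^ lm.1 * gaussBinom s n lm.1) •
          (y ^ (lm.2 + 1) * x ^ lm.1) =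
        y ^ (n + 1) + ∑ lm ∈ antidiagonal n, (s ^ (lm.1 + 1) * gaussBinom s n (lm.1 + 1)) •
          (y ^ lm.2 * x ^ (lm.1 + 1)) := by
      have h₁ := Nat.sum_antidiagonal_succ (n := n)
        (f := fun lm => (s ^ lm.1 * gaussBinom s n lm.1) • (y ^ lm.2 * x ^ lm.1))
      have h₂ := Nat.sum_antidiagonal_succ' (n := n)
        (f := fun lm => (s ^ lm.1 * gaussBinom s n lm.1) • (y ^ lm.2 * x ^ lm.1))
      simp only [gaussBinom_zero_right, gaussBinom_eq_zero_of_lt s (Nat.lt_succ_self n), mul_zero,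
        zero_smul, pow_zero, one_mul, one_smul, mul_one, zero_add] at h₁ h₂
      rw [← h₂, h₁]
    rw [pow_succ, ih, sum_mul, Nat.sum_antidiagonal_succ]
    simp only [smul_mul_assoc, mul_add, mul_assoc, hpow, ← pow_succ, mul_smul_comm,
      gaussBinom_succ_succ, gaussBinom_zero_right, add_smul, sum_add_distrib, smul_smul]
    simp only [← mul_assoc, ← pow_succ, mul_comm (gaussBinom s n _), shift, pow_zero, mul_one,
      one_smul]
    abel

end GaussianBinomials

section QuantumMatrices

variable {K A B m : Type*} [Field K] [Ring A] [Algebra K A] [Ring B] [Algebra K B] [LinearOrder m]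

/-- The entries of `T` satisfy the relations `R T₁ T₂ = T₂ T₁ R` of the coordinate ring of quantum
matrices with parameter `p`, here written out entrywise. -/
def IsQuantumMatrix (p : K) (T : Matrix m m A) : Prop :=
  ∀ i j k l, (if i = j then p else 1) • (T j k * T i l) +
      (if i < j then p - p⁻¹ else 0) • (T i k * T j l) =
    (if k = l then p else 1) • (T i l * T j k) + (if k < l then p - p⁻¹ else 0) • (T i k * T j l)

namespace IsQuantumMatrix

variable {p : K} {S T : Matrix m m A}

theorem row (hT : IsQuantumMatrix p T) (hp : p ≠ 0) {k l : m} (h : k < l) (i : m) :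
    T i k * T i l = p • (T i l * T i k) := by
  have hi : p • (T i k * T i l) = T i l * T i k + (p - p⁻¹) • (T i k * T i l) := by
    simpa [h, h.ne] using hT i i k l
  rw [sub_smul, add_sub_left_comm, left_eq_add, sub_eq_zero] at hi
  rw [hi, smul_inv_smul₀ hp]

theorem exchange (hT : IsQuantumMatrix p T) {i j : m} (h : i < j) (k l : m) :
    T i k * T j l = (if k = l then p else 1) • (T j l * T i k) +
      (if k < l then p - p⁻¹ else 0) • (T j k * T i l) := by
  simpa [h.ne', h.not_gt] using hT j i k l

theorem map (hT : IsQuantumMatrix p T) (f : A →ₐ[K] B) : IsQuantumMatrix p (T.map f) :=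
  fun i j k l => by
    simpa only [map_add, map_smul, map_mul, Matrix.map_apply] using congrArg f (hT i j k l)

theorem mul [Fintype m] (hS : IsQuantumMatrix p S) (hT : IsQuantumMatrix p T)
    (hST : ∀ i j k l, Commute (S i j) (T k l)) : IsQuantumMatrix p (S * T) := by
  have expand (i j k l : m) :
      (S * T) i k * (S * T) j l = ∑ a, ∑ b, (S i a * S j b) * (T a k * T b l) := by
    simp only [Matrix.mul_apply, Finset.sum_mul_sum, (hST _ _ _ _).symm.mul_mul_mul_comm]
  intro i j k l
  calc
    _ = ∑ a, ∑ b, ((if i = j then p else 1) • (S j a * S i b) +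
          (if i < j then p - p⁻¹ else 0) • (S i a * S j b)) * (T a k * T b l) := by
      simp only [expand, Finset.smul_sum, ← Finset.sum_add_distrib, add_mul, smul_mul_assoc]
    _ = ∑ a, ∑ b, ((if a = b then p else 1) • (S i b * S j a) +
          (if a < b then p - p⁻¹ else 0) • (S i a * S j b)) * (T a k * T b l) := by
      simp only [hS i j _ _]
    _ = ∑ a, ∑ b, S i a * S j b * ((if a = b then p else 1) • (T b k * T a l) +
          (if a < b then p - p⁻¹ else 0) • (T a k * T b l)) := by
      simp only [add_mul, mul_add, Finset.sum_add_distrib, smul_mul_assoc, mul_smul_comm]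
      rw [Finset.sum_comm]
      simp only [eq_comm]
    _ = ∑ a, ∑ b, S i a * S j b * ((if k = l then p else 1) • (T a l * T b k) +
          (if k < l then p - p⁻¹ else 0) • (T a k * T b l)) := by
      simp only [hT _ _ k l]
    _ = _ := by
      simp only [expand, Finset.smul_sum, ← Finset.sum_add_distrib, mul_add, mul_smul_comm]

theorem one : IsQuantumMatrix p (1 : Matrix m m A) := fun i j k l => by
  simp only [Matrix.one_apply]
  split_ifs <;> simp_all

end IsQuantumMatrix

/-- The `2 × 2` quantum minor of `T` with rows `i, j` and columns `k, l`. -/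
def quantumMinor {m : Type*} (p : K) (T : Matrix m m A) (i j k l : m) : A :=
  T i k * T j l - p • (T i l * T j k)

theorem Intertwines.quantumMinor {m : Type*} {X : A} {M N : Matrix m m A} (h : Intertwines X M N)
    (p : K) (i j k l : m) :
    SemiconjBy X (quantumMinor p N i j k l) (quantumMinor p M i j k l) :=
  ((h _ _).mul_right (h _ _)).sub_right (((h _ _).mul_right (h _ _)).smul_right p)

variable {p : K}

namespace IsQuantumMatrix

variable {T : Matrix m m A}

theorem quantumMinor_self_left (hT : IsQuantumMatrix p T) (hp : p ≠ 0) (i : m) {k l : m}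
    (h : k < l) : quantumMinor p T i i k l = 0 :=
  sub_eq_zero.2 (hT.row hp h i)

theorem quantumMinor_swap_left (hT : IsQuantumMatrix p T) (hp : p ≠ 0) {i j k l : m} (hij : i < j)
    (hkl : k < l) : quantumMinor p T j i k l = -p • quantumMinor p T i j k l := by
  have antidiagonal : T j k * T i l = T i l * T j k := by
    simpa [hkl.ne', hkl.not_gt] using (hT.exchange hij l k).symm
  have diagonal : T i k * T j l = T j l * T i k + (p - p⁻¹) • (T j k * T i l) := by
    simpa [hkl, hkl.ne] using hT.exchange hij k l
  rw [quantumMinor, quantumMinor, diagonal, antidiagonal]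
  match_scalars <;> field

end IsQuantumMatrix

theorem quantumMinor_mul {m : Type*} [Fintype m] {S T : Matrix m m A}
    (hST : ∀ i j k l, Commute (S i j) (T k l)) (i j k l : m) :
    quantumMinor p (S * T) i j k l = ∑ a, ∑ b, S i a * S j b * quantumMinor p T a b k l := by
  simp only [quantumMinor, Matrix.mul_apply, Finset.sum_mul_sum,
    (hST _ _ _ _).symm.mul_mul_mul_comm, Finset.smul_sum, ← Finset.sum_sub_distrib, mul_sub,
    mul_smul_comm]

/-- The pairs `{0, 1}, {0, 2}, {1, 2}` indexing the rows and columns of a compound matrix. -/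
def indexPair : Fin 3 → Fin 3 × Fin 3 := ![(0, 1), (0, 2), (1, 2)]

/-- The second compound of a `3 × 3` matrix: the matrix of its `2 × 2` quantum minors. -/
def compound (p : K) (T : Matrix (Fin 3) (Fin 3) A) : Matrix (Fin 3) (Fin 3) A :=
  .of fun r c => quantumMinor p T (indexPair r).1 (indexPair r).2 (indexPair c).1 (indexPair c).2

variable {S T : Matrix (Fin 3) (Fin 3) A}

theorem Intertwines.compound {X : A} (h : Intertwines X S T) :
    Intertwines X (compound p S) (compound p T) :=
  fun _ _ => h.quantumMinor p _ _ _ _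

theorem compound_map {G : Type*} [FunLike G A B] [AlgHomClass G K A B] (f : G) :
    compound p (T.map f) = (compound p T).map f := by
  ext r c
  simp [compound, quantumMinor]

theorem compound_one : compound p (1 : Matrix (Fin 3) (Fin 3) A) = 1 := by
  ext r c
  fin_cases r <;> fin_cases c <;> simp [compound, quantumMinor, indexPair, Matrix.one_apply]

theorem compound_mul (hT : IsQuantumMatrix p T) (hp : p ≠ 0)
    (hST : ∀ i j k l, Commute (S i j) (T k l)) :
    compound p (S * T) = compound p S * compound p T := by
  have lt (r : Fin 3) : (indexPair r).1 < (indexPair r).2 := by decide +revert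
  have hswap {a b : Fin 3} (h : a < b) (c : Fin 3) := hT.quantumMinor_swap_left hp h (lt c)
  ext r c
  rw [Matrix.mul_apply, Fin.sum_univ_three]
  simp only [compound, Matrix.of_apply, quantumMinor_mul hST, Fin.sum_univ_three,
    hT.quantumMinor_self_left hp _ (lt c)]
  rw [hswap (show (0 : Fin 3) < 1 by decide), hswap (show (0 : Fin 3) < 2 by decide),
    hswap (show (1 : Fin 3) < 2 by decide)]
  simp only [quantumMinor, indexPair, Matrix.cons_val_zero, Matrix.cons_val_one, Matrix.cons_val,
    sub_mul (S _ _ * S _ _), smul_mul_assoc, mul_smul_comm, neg_smul, mul_neg, mul_zero]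
  abel

section QuantumWords

variable {κ ι σ : Type*} [DecidableEq ι]

theorem commute_site_word {m : Type*} [Fintype m] [DecidableEq m]
    {T : κ → Matrix m m (Module.End K (σ →₀ K))}
    {r : ι} {w : List (κ × ι)} (h : r ∉ w.map Prod.snd) (X : Module.End K (σ →₀ K)) (i j : m) :
    Commute ((Subsystem.site σ r).op X) (word T w i j) :=
  intertwines_word_self (fun _ hx Y => Subsystem.commute_site_site
    (ne_of_mem_of_not_mem (List.mem_map_of_mem hx) h).symm X Y) i j

theorem isQuantumMatrix_word [Fintype m] {T : κ → Matrix m m (Module.End K (σ →₀ K))}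
    (hT : ∀ k, IsQuantumMatrix p (T k)) {w : List (κ × ι)} (hw : (w.map Prod.snd).Nodup) :
    IsQuantumMatrix p (word T w) := by
  induction w with
  | nil => exact .one
  | cons x w ih =>
    rw [List.map_cons, List.nodup_cons] at hw
    rw [word_cons]
    exact ((hT x.1).map _).mul (ih hw.2) fun _ _ => commute_site_word hw.1 _

theorem compound_word {T : κ → Matrix (Fin 3) (Fin 3) (Module.End K (σ →₀ K))} (hp : p ≠ 0)
    (hT : ∀ k, IsQuantumMatrix p (T k)) {w : List (κ × ι)} (hw : (w.map Prod.snd).Nodup) :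
    compound p (word T w) = word (fun k => compound p (T k)) w := by
  induction w with
  | nil => exact compound_one
  | cons x w ih =>
    rw [List.map_cons, List.nodup_cons] at hw
    rw [word_cons, word_cons, ← ih hw.2, ← compound_map]
    exact compound_mul (isQuantumMatrix_word hT hw.2) hp fun _ _ => commute_site_word hw.1 _

end QuantumWords

end QuantumMatrices

section Oscillators

/-- The relations of the `p`-oscillator algebra, with lowering operator `a`, raising operator `b`
and number operator `k`. -/
structure IsOscillator {K A : Type*} [Field K] [Ring A] [Algebra K A] (p : K) (a b k : A) :
    Prop where
  lower_mul_raise : a * b = 1 - p ^ 2 • (k * k)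
  raise_mul_lower : b * a = 1 - k * k
  number_mul_raise : k * b = p • (b * k)
  lower_mul_number : a * k = p • (k * a)

section Cells

variable {K A : Type*} [Field K] [Ring A] [Algebra K A]

/-- The `3 × 3` quantum matrix with oscillator entries in rows and columns `n, n + 1`: the
representation of the quantized coordinate ring of `SL₃` attached to a simple reflection. -/
def cell (a b k : A) (α β : K) : Fin 2 → Matrix (Fin 3) (Fin 3) A :=
  ![!![a, α • k, 0;
       β • k, b, 0;
       0, 0, 1],
    !![1, 0, 0;
       0, a, α • k;
       0, β • k, b]]

/-- The symmetric square of an oscillator block: the representation of the quantized coordinate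
ring of `SO₃` attached to the short simple reflection. -/
def orthogonalCell (p : K) (a b k : A) (γ : K) : Matrix (Fin 3) (Fin 3) A :=
  !![a * a, γ • (k * a), (-(1 + p ^ 2)⁻¹ * γ ^ 2) • (k * k);
     (-(1 + p ^ 2) * γ⁻¹) • (a * k), a * b - k * k, (-p⁻¹ * γ) • (k * b);
     (-(1 + p ^ 2) * p ^ 2 * γ⁻¹ ^ 2) • (k * k), ((1 + p ^ 2) * γ⁻¹) • (k * b), b * b]

variable {p α β : K} {a b k : A}

theorem isQuantumMatrix_cell (hosc : IsOscillator p a b k) (hp : p ≠ 0) (h : α * β = -p)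
    (n : Fin 2) : IsQuantumMatrix p (cell a b k α β n) := by
  have h' : β * α = -p := by rw [mul_comm, h]
  intro i j k l
  fin_cases n <;> fin_cases i <;> fin_cases j <;> fin_cases k <;> fin_cases l <;>
    simp only [cell, Matrix.of_apply, Matrix.cons_val, Fin.isValue, Fin.reduceFinMk, Fin.zero_eta,
      Fin.mk_one, Fin.reduceEq, Fin.reduceLT, ↓reduceIte, smul_mul_assoc, mul_smul_comm, mul_one,
      one_mul, mul_zero, zero_mul, smul_smul, hosc.lower_mul_raise, hosc.raise_mul_lower,
      hosc.number_mul_raise, hosc.lower_mul_number, h, h'] <;>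
    match_scalars <;> field

theorem compound_cell (hosc : IsOscillator p a b k) (h : α * β = -p) (n : Fin 2) :
    compound p (cell a b k α β n) = cell a b k α β n.rev := by
  have h' : β * α = -p := by rw [mul_comm, h]
  ext i j
  fin_cases n <;> fin_cases i <;> fin_cases j <;>
    simp [cell, compound, quantumMinor, indexPair, hosc.lower_mul_raise, h', smul_smul, pow_two]

end Cells

theorem q_ne_zero : q ≠ 0 := RatFunc.X_ne_zero

theorem q_pow_ne_one {n : ℕ} (hn : n ≠ 0) : q ^ n ≠ 1 := fun h => by
  have h' : algebraMap (Polynomial ℚ) Fq (Polynomial.X ^ n) =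
      algebraMap (Polynomial ℚ) Fq 1 := by
    rw [map_pow, map_one, RatFunc.algebraMap_X]; exact h
  have := congrArg Polynomial.natDegree (RatFunc.algebraMap_injective ℚ h')
  rw [Polynomial.natDegree_X_pow, Polynomial.natDegree_one] at this
  exact hn this

@[simp]
theorem opOf_ket (v : ℕ → F) (m : ℕ) : opOf v (ket m) = v m := by
  simp [opOf, ket]

theorem end_ext {X Y : Module.End Fq F} (h : ∀ m, X (ket m) = Y (ket m)) : X = Y :=
  Finsupp.lhom_ext' fun m => LinearMap.ext_ring (h m)

theorem isOscillator_opOf (p : Fq) : IsOscillator (A := Module.End Fq F) p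
    (opOf fun m => (1 - p ^ (2 * m)) • ket (m - 1)) (opOf fun m => ket (m + 1))
    (opOf fun m => p ^ m • ket m) where
  lower_mul_raise := end_ext fun m => by
    simp [sub_smul, smul_smul]
    ring_nf
  raise_mul_lower := end_ext fun m => by
    cases m
    · simp
    · simp [sub_smul, smul_smul]
      ring_nf
  number_mul_raise := end_ext fun m => by
    simp [smul_smul, pow_succ']
  lower_mul_number := end_ext fun m => by
    cases m
    · simp
    · simp [smul_smul]
      ring_nf

theorem isOscillator_Am_Ap_K2 : IsOscillator (A := Module.End Fq F) (q ^ 2) Am Ap K2 := by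
  have h := isOscillator_opOf (q ^ 2)
  simp only [← pow_mul, ← mul_assoc] at h
  exact h

theorem isOscillator_am_ap_kk : IsOscillator (A := Module.End Fq F) q am ap kk :=
  isOscillator_opOf q

end Oscillators

section Intertwining

variable {K V κ γ : Type*} [Field K] [AddCommGroup V] [Module K V]

/-- The vectors `v k` generate `V` as a module over the algebra generated by the operators `G g`. -/
def Generates (G : γ → Module.End K V) (v : κ → V) : Prop :=
  ∀ P : Submodule K V, (∀ k, v k ∈ P) → (∀ g, ∀ w ∈ P, G g w ∈ P) → P = ⊤

/-- Intertwining of `X` and `X'` propagates along generators with which they have the same exchange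
relations. -/
theorem Generates.semiconjBy {G G' Y Y' : γ → Module.End K V} {S X X' : Module.End K V} {e : γ → K}
    {v : κ → V} (hG : Generates G v) (hS : ∀ g, SemiconjBy S (G g) (G' g))
    (hX : ∀ g, X * G g = e g • (G g * X) + Y g) (hX' : ∀ g, X' * G' g = e g • (G' g * X') + Y' g)
    (hY : ∀ g, SemiconjBy S (Y g) (Y' g)) (hv : ∀ k, S (X (v k)) = X' (S (v k))) :
    SemiconjBy S X X' := by
  refine LinearMap.eqLocus_eq_top.1 (hG (LinearMap.eqLocus (S * X) (X' * S)) hv fun g w hw => ?_)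
  calc
    S ((X * G g) w) = e g • (S * G g) (X w) + (S * Y g) w := by simp [hX]
    _ = e g • G' g ((S * X) w) + (Y' g * S) w := by rw [hS, hY]; rfl
    _ = e g • G' g ((X' * S) w) + (Y' g * S) w := by rw [hw]
    _ = (X' * G' g) (S w) := by rw [hX']; rfl
    _ = X' ((S * G g) w) := by rw [hS]; rfl

variable {p : K} {S : Module.End K V} {T U : Matrix (Fin 3) (Fin 3) (Module.End K V)} {v : κ → V}

theorem intertwines_of_last_row (hp : p ≠ 0) (hT : IsQuantumMatrix p T) (hU : IsQuantumMatrix p U)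
    (hgen : Generates (fun g : Fin 2 => U 2 g.succ) v)
    (hlast : ∀ g : Fin 2, SemiconjBy S (U 2 g.succ) (T 2 g.succ))
    (hv : ∀ i c k, S (U i c (v k)) = T i c (S (v k))) : Intertwines S T U := by
  have hrow (c : Fin 3) : SemiconjBy S (U 2 c) (T 2 c) := by
    cases c using Fin.cases with
    | succ g => exact hlast g
    | zero =>
      refine hgen.semiconjBy hlast (e := fun _ => p) (Y := 0) (Y' := 0) (fun g => ?_) (fun g => ?_)
        (fun _ => SemiconjBy.zero_right S) (hv 2 0)
      · simpa using hU.row hp g.succ_pos 2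
      · simpa using hT.row hp g.succ_pos 2
  intro i c
  obtain rfl | hi : i = 2 ∨ i < 2 := by omega
  · exact hrow c
  · induction c using WellFoundedGT.induction with
    | ind c ih =>
      refine hgen.semiconjBy hlast (fun g => hU.exchange hi c g.succ)
        (fun g => hT.exchange hi c g.succ) (fun g => ?_) (hv i c)
      split_ifs with hcg
      · exact ((hrow c).mul_right (ih _ hcg)).smul_right _
      · simp

theorem intertwines_of_ordered_span (hp : p ≠ 0) (hT : IsQuantumMatrix p T)
    (hU : IsQuantumMatrix p U)
    (hspan : Submodule.span K (Set.range fun x : ℕ × ℕ × κ =>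
      (U 2 1 ^ x.1 * U 2 2 ^ x.2.1) (v x.2.2)) = ⊤)
    (hS : ∀ i j k, S ((U 2 1 ^ i * U 2 2 ^ j) (v k)) = (T 2 1 ^ i * T 2 2 ^ j) (v k))
    (hv : ∀ i c k, S (U i c (v k)) = T i c (v k)) : Intertwines S T U := by
  have hSv (k : κ) : S (v k) = v k := by simpa using hS 0 0 k
  have pow_exchange {a b : Module.End K V} (h : a * b = p • (b * a)) (i : ℕ) :
      b * a ^ i = p⁻¹ ^ i • (a ^ i * b) := by
    induction i with
    | zero => simp
    | succ i ih =>
      have h' : b * a = p⁻¹ • (a * b) := by rw [h, inv_smul_smul₀ hp]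
      rw [pow_succ, ← mul_assoc, ih, smul_mul_assoc, mul_assoc, h', mul_smul_comm, smul_smul,
        ← pow_succ, mul_assoc]
  have hU21 := pow_exchange (hU.row hp (show (1 : Fin 3) < 2 by decide) 2)
  have hT21 := pow_exchange (hT.row hp (show (1 : Fin 3) < 2 by decide) 2)
  have hgen : Generates (fun g : Fin 2 => U 2 g.succ) v := by
    refine fun P hP hstable => top_le_iff.1 (hspan ▸ Submodule.span_le.2 ?_)
    rintro _ ⟨⟨i, j, k⟩, rfl⟩
    have pow_mem (g : Fin 2) (n : ℕ) {w : V} (hw : w ∈ P) : (U 2 g.succ ^ n) w ∈ P :=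
      Module.End.pow_apply_mem_of_forall_mem n (hstable g) w hw
    exact pow_mem 0 i (pow_mem 1 j (hP k))
  refine intertwines_of_last_row hp hT hU hgen (fun g => ?_) (fun i c k => by rw [hv, hSv])
  refine LinearMap.ext_on_range hspan fun x => ?_
  obtain ⟨i, j, k⟩ := x
  fin_cases g
  · calc
      S ((U 2 1 * (U 2 1 ^ i * U 2 2 ^ j)) (v k)) = S ((U 2 1 ^ (i + 1) * U 2 2 ^ j) (v k)) := by
        rw [← mul_assoc, ← pow_succ']
      _ = (T 2 1 * (T 2 1 ^ i * T 2 2 ^ j)) (v k) := by rw [hS, ← mul_assoc, ← pow_succ']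
      _ = T 2 1 (S ((U 2 1 ^ i * U 2 2 ^ j) (v k))) := by rw [hS]; rfl
  · calc
      S ((U 2 2 * (U 2 1 ^ i * U 2 2 ^ j)) (v k)) =
          p⁻¹ ^ i • S ((U 2 1 ^ i * U 2 2 ^ (j + 1)) (v k)) := by
        rw [← mul_assoc, hU21, smul_mul_assoc, mul_assoc, ← pow_succ', LinearMap.smul_apply,
          map_smul]
      _ = (T 2 2 * (T 2 1 ^ i * T 2 2 ^ j)) (v k) := by
        rw [hS, ← mul_assoc, hT21, smul_mul_assoc, mul_assoc, ← pow_succ', LinearMap.smul_apply]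
      _ = T 2 2 (S ((U 2 1 ^ i * U 2 2 ^ j) (v k))) := by rw [hS]; rfl

end Intertwining

section SOperator

/-- The falling `q`-factorial `(1 - sⁿ)(1 - sⁿ⁻¹)⋯`, with `m` factors. -/
def qDesc {R : Type*} [CommRing R] (s : R) (n m : ℕ) : R := ∏ l ∈ Finset.range m, (1 - s ^ (n - l))

theorem qDesc_succ {R : Type*} [CommRing R] (s : R) (n m : ℕ) :
    qDesc s n (m + 1) = qDesc s n m * (1 - s ^ (n - m)) :=
  Finset.prod_range_succ _ m

theorem qDesc_eq_zero_of_lt {R : Type*} [CommRing R] (s : R) {n m : ℕ} (h : n < m) :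
    qDesc s n m = 0 :=
  Finset.prod_eq_zero (Finset.mem_range.2 h) (by simp)

theorem qDesc_mul_qPoch {R : Type*} [CommRing R] (s : R) (n m : ℕ) :
    qDesc s (n + m) m * qPoch s n = qPoch s (n + m) := by
  induction m generalizing n with
  | zero => simp [qDesc]
  | succ m ih =>
    rw [← add_assoc, add_right_comm, qDesc_succ, add_tsub_cancel_right, mul_assoc,
      mul_comm (1 - _), ← qPoch_succ, ih]

/-- The basis vector `|a⟩ ⊗ |b⟩ ⊗ |c⟩`. -/
def ket₃ (a b c : ℕ) : (Fin 3 → ℕ) →₀ Fq := single ![a, b, c] 1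

open Subsystem

@[simp]
theorem site_zero_op_ket₃ (X : Module.End Fq F) (a b c : ℕ) :
    (site ℕ (0 : Fin 3)).op X (ket₃ a b c) = lmapDomain Fq Fq (![·, b, c]) (X (ket a)) := by
  rw [ket₃, op_single]
  congr 2
  ext x i
  fin_cases i <;> simp

@[simp]
theorem site_one_op_ket₃ (X : Module.End Fq F) (a b c : ℕ) :
    (site ℕ (1 : Fin 3)).op X (ket₃ a b c) = lmapDomain Fq Fq (![a, ·, c]) (X (ket b)) := by
  rw [ket₃, op_single]
  congr 2
  ext x i
  fin_cases i <;> simp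

@[simp]
theorem site_two_op_ket₃ (X : Module.End Fq F) (a b c : ℕ) :
    (site ℕ (2 : Fin 3)).op X (ket₃ a b c) = lmapDomain Fq Fq (![a, b, ·]) (X (ket c)) := by
  rw [ket₃, op_single]
  congr 2
  ext x i
  fin_cases i <;> simp

@[simp]
theorem mapDomain_zero_ket (a b c : ℕ) : (ket a).mapDomain (![·, b, c]) = ket₃ a b c :=
  Finsupp.mapDomain_single

@[simp]
theorem mapDomain_one_ket (a b c : ℕ) : (ket b).mapDomain (![a, ·, c]) = ket₃ a b c :=
  Finsupp.mapDomain_single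

@[simp]
theorem mapDomain_two_ket (a b c : ℕ) : (ket c).mapDomain (![a, b, ·]) = ket₃ a b c :=
  Finsupp.mapDomain_single

theorem ket₃_ext {X Y : Module.End Fq ((Fin 3 → ℕ) →₀ Fq)}
    (h : ∀ a b c, X (ket₃ a b c) = Y (ket₃ a b c)) : X = Y := by
  refine Finsupp.lhom_ext' fun f => LinearMap.ext_ring ?_
  have hf : f = ![f 0, f 1, f 2] := by ext i; fin_cases i <;> rfl
  rw [hf]
  exact h _ _ _

/-- One of the two summands of the entry `(2, 1)` of the word `s₂s₁s₂`, up to the scalar `β`; the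
other one is `shiftW`. -/
def shiftZ : Module.End Fq ((Fin 3 → ℕ) →₀ Fq) :=
  (site ℕ 0).op K2 * (site ℕ 1).op Ap * (site ℕ 2).op Am

/-- The summand of the entry `(2, 1)` of the word `s₂s₁s₂`, up to the scalar `β`, that leaves the
middle tensor factor alone. -/
def shiftW : Module.End Fq ((Fin 3 → ℕ) →₀ Fq) := (site ℕ 0).op Ap * (site ℕ 2).op K2

/-- One of the two summands of the entry `(2, 2)` of the word `s₂s₁s₂`, up to the scalar `-q ^ 2`;
the other one is `shiftY`. -/
def shiftX : Module.End Fq ((Fin 3 → ℕ) →₀ Fq) :=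
  (site ℕ 0).op K2 * (site ℕ 1).op Ap * (site ℕ 2).op K2

/-- The summand of the entry `(2, 2)` of the word `s₂s₁s₂` that leaves the middle tensor factor
alone. -/
def shiftY : Module.End Fq ((Fin 3 → ℕ) →₀ Fq) := (site ℕ 0).op Ap * (site ℕ 2).op Ap

theorem shiftZ_ket₃ (a b c : ℕ) : shiftZ (ket₃ a b c) =
    (q ^ (2 * a) * (1 - q ^ (4 * c))) • ket₃ a (b + 1) (c - 1) := by
  simp [shiftZ, K2, Ap, Am, smul_smul, mul_comm]

theorem shiftW_ket₃ (a b c : ℕ) : shiftW (ket₃ a b c) = q ^ (2 * c) • ket₃ (a + 1) b c := by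
  simp [shiftW, K2, Ap]

theorem shiftX_ket₃ (a b c : ℕ) : shiftX (ket₃ a b c) = q ^ (2 * (a + c)) • ket₃ a (b + 1) c := by
  simp [shiftX, K2, Ap, smul_smul]
  ring_nf

theorem shiftY_ket₃ (a b c : ℕ) : shiftY (ket₃ a b c) = ket₃ (a + 1) b (c + 1) := by
  simp [shiftY, Ap]

theorem shiftZ_pow_ket₃ (a b c m : ℕ) : (shiftZ ^ m) (ket₃ a b c) =
    (q ^ (2 * a * m) * qDesc (q ^ 4) c m) • ket₃ a (b + m) (c - m) := by
  induction m with
  | zero => simp [qDesc]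
  | succ m ih =>
    rw [pow_succ', Module.End.mul_apply, ih, map_smul, shiftZ_ket₃, smul_smul, qDesc_succ,
      ← pow_mul, Nat.sub_sub]
    ring_nf

theorem shiftW_pow_ket₃ (a b c m : ℕ) :
    (shiftW ^ m) (ket₃ a b c) = q ^ (2 * c * m) • ket₃ (a + m) b c := by
  induction m with
  | zero => simp
  | succ m ih =>
    rw [pow_succ', Module.End.mul_apply, ih, map_smul, shiftW_ket₃, smul_smul]
    ring_nf

theorem shiftX_pow_ket₃ (a b c m : ℕ) :
    (shiftX ^ m) (ket₃ a b c) = q ^ (2 * (a + c) * m) • ket₃ a (b + m) c := by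
  induction m with
  | zero => simp
  | succ m ih =>
    rw [pow_succ', Module.End.mul_apply, ih, map_smul, shiftX_ket₃, smul_smul]
    ring_nf

theorem shiftY_pow_ket₃ (a b c m : ℕ) :
    (shiftY ^ m) (ket₃ a b c) = ket₃ (a + m) b (c + m) := by
  induction m with
  | zero => simp
  | succ m ih => rw [pow_succ', Module.End.mul_apply, ih, shiftY_ket₃]; rfl

theorem shiftZ_mul_shiftW : shiftZ * shiftW = q ^ 4 • (shiftW * shiftZ) := ket₃_ext fun a b c => by
  cases c
  · simp [shiftZ_ket₃, shiftW_ket₃]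
  · simp [shiftZ_ket₃, shiftW_ket₃, smul_smul]
    ring_nf

theorem shiftX_mul_shiftY : shiftX * shiftY = q ^ 4 • (shiftY * shiftX) := ket₃_ext fun a b c => by
  simp [shiftX_ket₃, shiftY_ket₃, smul_smul]
  ring_nf

end SOperator

section BasisSums

theorem finsum_fin_succ {α M : Type*} [AddCommMonoid M] {n : ℕ} (g : (Fin (n + 1) → α) → M)
    (hg : g.support.Finite) : ∑ᶠ f, g f = ∑ᶠ (a) (f), g (Matrix.vecCons a f) := by
  rw [← finsum_comp_equiv (Fin.consEquiv fun _ => α),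
    finsum_curry _ (hg.preimage (Fin.consEquiv fun _ => α).injective.injOn)]
  rfl

theorem finite_support_vecCons {α M : Type*} [Zero M] {n : ℕ} {g : (Fin (n + 1) → α) → M}
    (hg : g.support.Finite) (a : α) : (fun f => g (Matrix.vecCons a f)).support.Finite :=
  hg.preimage (Fin.cons_right_injective (α := fun _ => α) a).injOn

theorem finite_support_smul_single {ι R : Type*} [Semiring R] (v : ι →₀ R) :
    (fun i => v i • single i (1 : R)).support.Finite :=
  v.support.finite_toSet.subset fun i hi =>
    Finsupp.mem_support_iff.2 fun h => hi (by simp [h])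

theorem finsum_smul_single {ι R : Type*} [Semiring R] (v : ι →₀ R) :
    ∑ᶠ i, v i • single i (1 : R) = v := by
  rw [finsum_eq_sum_of_support_subset (s := v.support) _
    fun i hi => Finsupp.mem_support_iff.2 fun h => hi (by simp [h])]
  simpa [Finsupp.sum] using v.sum_single

theorem finsum_fin_three_smul_single {R : Type*} [Semiring R] (v : (Fin 3 → ℕ) →₀ R) :
    ∑ᶠ (a) (b) (c), v ![a, b, c] • single ![a, b, c] (1 : R) = v := by
  have h := finite_support_smul_single v
  conv_rhs => rw [← finsum_smul_single v, finsum_fin_succ _ h]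
  refine finsum_congr fun a => ?_
  have ha := finite_support_vecCons h a
  rw [finsum_fin_succ _ ha]
  refine finsum_congr fun b => ?_
  rw [finsum_fin_succ _ (finite_support_vecCons ha b)]
  refine finsum_congr fun c => ?_
  rw [finsum_unique]
  rfl

end BasisSums

section SMatrix

theorem qfac_natCast (n : ℕ) : qfac (q ^ 4) n = qPoch (q ^ 4) n := by
  simp [qfac, qPoch]

theorem qfac_eq_zero_of_neg {n : ℤ} (h : n < 0) : qfac (q ^ 4) n = 0 := by
  simp [qfac, h.not_ge]

theorem qPoch_ne_zero (n : ℕ) : qPoch (q ^ 4) n ≠ 0 :=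
  Finset.prod_ne_zero_iff.2 fun l _ => sub_ne_zero.2 fun h =>
    q_pow_ne_one (n := 4 * (l + 1)) (by lia) (by rw [pow_mul, ← h])

theorem qfac_div_eq_gaussBinom (n l : ℕ) :
    qfac (q ^ 4) n / (qfac (q ^ 4) l * qfac (q ^ 4) ((n : ℤ) - l)) = gaussBinom (q ^ 4) n l := by
  obtain h | h := lt_or_ge n l
  · rw [qfac_eq_zero_of_neg (n := (n : ℤ) - l) (by lia), gaussBinom_eq_zero_of_lt _ h, mul_zero,
      div_zero]
  · obtain ⟨m, rfl⟩ := Nat.exists_eq_add_of_le h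
    rw [Nat.cast_add, add_sub_cancel_left, ← Nat.cast_add]
    simp only [qfac_natCast]
    rw [← gaussBinom_mul_qPoch_mul_qPoch,
      mul_div_cancel_right₀ _ (mul_ne_zero (qPoch_ne_zero l) (qPoch_ne_zero m))]

theorem qfac_div_eq_qDesc (c m : ℕ) :
    qfac (q ^ 4) ((c : ℤ) + m) / qfac (q ^ 4) c = qDesc (q ^ 4) (c + m) m := by
  rw [← Nat.cast_add]
  simp only [qfac_natCast]
  rw [← qDesc_mul_qPoch, mul_div_cancel_right₀ _ (qPoch_ne_zero c)]

/-- The summand of `𝒮^{abc}_{ijk}` with `λ = l` and `μ = m`, which does not depend on `a, b, c` once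
`l` and `m` are given. -/
def sTerm (i j k l m : ℕ) : Fq :=
  (-1) ^ l * q ^ (2 * (i : ℤ) * ((k : ℤ) - l - m) + 2 * ((k : ℤ) + 1) * l + 2 * (m : ℤ) * (m - k)) *
    (gaussBinom (q ^ 4) i m * gaussBinom (q ^ 4) j l * qDesc (q ^ 4) (j + k - l) m)

theorem sTerm_eq_zero {i j k l m : ℕ} (h : ¬(m ≤ i ∧ l ≤ j ∧ l + m ≤ j + k)) :
    sTerm i j k l m = 0 := by
  have h' : i < m ∨ j < l ∨ j + k - l < m := by lia
  obtain h | h | h := h'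
  · simp [sTerm, gaussBinom_eq_zero_of_lt _ h]
  · simp [sTerm, gaussBinom_eq_zero_of_lt _ h]
  · simp [sTerm, qDesc_eq_zero_of_lt _ h]

open Finset in
theorem Scoef_eq_sum_sTerm (a b c i j k : ℕ) : Scoef a b c i j k =
    ∑ x ∈ antidiagonal b, if i + j = a + b ∧ j + k = b + c then sTerm i j k x.2 x.1 else 0 := by
  rw [Nat.sum_antidiagonal_eq_sum_range_succ_mk, Scoef]
  by_cases h : i + j = a + b ∧ j + k = b + c
  · simp only [h, and_self, if_true, one_mul]
    refine sum_congr rfl fun m hm => ?_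
    obtain ⟨l, rfl⟩ := Nat.exists_eq_add_of_le' (Nat.lt_succ_iff.1 (mem_range.1 hm))
    have hc : ((l + m : ℕ) : ℤ) - m = l := by lia
    have hcj : (c : ℤ) - j = k - l - m := by lia
    have hcm : j + k - l = c + m := by lia
    rw [hc, hcj, add_tsub_cancel_right, sTerm, hcm, ← qfac_div_eq_gaussBinom,
      ← qfac_div_eq_gaussBinom, ← qfac_div_eq_qDesc]
    ring
  · rw [sum_eq_zero fun _ _ => if_neg h]
    rw [not_and_or] at h
    obtain h | h := h <;> simp [h]

/-- The operator `𝒮` on `F ⊗ F ⊗ F`, in the coordinates of the basis `|a⟩ ⊗ |b⟩ ⊗ |c⟩`. -/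
def S₃ : Module.End Fq ((Fin 3 → ℕ) →₀ Fq) :=
  Finsupp.lift _ Fq _ fun f =>
    ∑ᶠ (a) (b) (c), Scoef a b c (f 0) (f 1) (f 2) • single ![a, b, c] 1

theorem ket₃_apply (a b c a' b' c' : ℕ) :
    ket₃ a b c ![a', b', c'] = if a = a' ∧ b = b' ∧ c = c' then 1 else 0 := by
  rw [ket₃, Finsupp.single_apply]
  simp [Matrix.vecCons_inj]

open Finset in
theorem S₃_ket₃ (i j k : ℕ) : S₃ (ket₃ i j k) =
    ∑ l ∈ range (j + 1), ∑ m ∈ range (i + 1),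
      sTerm i j k l m • ket₃ (i + j - (l + m)) (l + m) (j + k - (l + m)) := by
  have matrix_elements : S₃ (ket₃ i j k) =
      ∑ᶠ (a) (b) (c), Scoef a b c i j k • single ![a, b, c] (1 : Fq) := by
    simp [S₃, ket₃]
  rw [matrix_elements, ← finsum_fin_three_smul_single (∑ l ∈ range (j + 1), _)]
  refine finsum_congr fun a => finsum_congr fun b => finsum_congr fun c => ?_
  congr 1
  have coefficient (l m : ℕ) :
      (sTerm i j k l m • ket₃ (i + j - (l + m)) (l + m) (j + k - (l + m))) ![a, b, c] =
        if m + l = b then if i + j = a + b ∧ j + k = b + c then sTerm i j k l m else 0 else 0 := by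
    rw [Finsupp.smul_apply, ket₃_apply]
    by_cases h : m ≤ i ∧ l ≤ j ∧ l + m ≤ j + k
    · rw [← ite_and, smul_eq_mul, mul_ite, mul_one, mul_zero]
      exact if_congr (by lia) rfl rfl
    · simp [sTerm_eq_zero h]
  simp only [Finsupp.finsetSum_apply, coefficient]
  rw [sum_comm, ← sum_product' _ _ fun m l =>
    if m + l = b then if i + j = a + b ∧ j + k = b + c then sTerm i j k l m else 0 else 0,
    ← sum_filter, Scoef_eq_sum_sTerm]
  refine (sum_subset
    (fun x hx => HasAntidiagonal.mem_antidiagonal.2 (mem_filter.1 hx).2) fun x hx hx' => ?_).symm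
  rw [sTerm_eq_zero, ite_self]
  rintro ⟨hm, hl, -⟩
  exact hx' (mem_filter.2 ⟨mem_product.2 ⟨mem_range.2 (by lia), mem_range.2 (by lia)⟩,
    HasAntidiagonal.mem_antidiagonal.1 hx⟩)

end SMatrix

section SBraid

theorem monomial_ket₃ (r m n l k : ℕ) :
    (shiftW ^ r * shiftZ ^ m * (shiftY ^ n * ((-q ^ 2) • shiftX) ^ l)) (ket₃ 0 0 k) =
      ((-q ^ 2) ^ l * q ^ (2 * k * l + 2 * n * m + 2 * (k + n - m) * r) * qDesc (q ^ 4) (k + n) m) •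
        ket₃ (n + r) (l + m) (k + n - m) := by
  simp only [smul_pow, Module.End.mul_apply, LinearMap.smul_apply, map_smul, shiftX_pow_ket₃,
    shiftY_pow_ket₃, shiftZ_pow_ket₃, shiftW_pow_ket₃, smul_smul]
  ring_nf

theorem q_pow_mul_sTerm (r m n l k : ℕ) :
    q ^ (2 * (m + r) * (l + n)) * sTerm (m + r) (l + n) k l m =
    gaussBinom (q ^ 4) (m + r) m * gaussBinom (q ^ 4) (l + n) l *
      ((-q ^ 2) ^ l * q ^ (2 * k * l + 2 * n * m + 2 * (k + n - m) * r) *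
        qDesc (q ^ 4) (k + n) m) := by
  have hd : l + n + k - l = k + n := by lia
  rw [sTerm, hd]
  obtain h | h := lt_or_ge (k + n) m
  · simp [qDesc_eq_zero_of_lt _ h]
  obtain ⟨e, he⟩ := Nat.exists_eq_add_of_le' h
  have hk : (k : ℤ) = e + m - n := by lia
  have hq : q ^ (2 * (m + r) * (l + n)) * q ^ (2 * ((m + r : ℕ) : ℤ) * ((k : ℤ) - l - m) +
      2 * ((k : ℤ) + 1) * l + 2 * (m : ℤ) * (m - k)) =
      (q ^ 2) ^ l * q ^ (2 * k * l + 2 * n * m + 2 * (k + n - m) * r) := by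
    rw [he, add_tsub_cancel_right, ← pow_mul, ← pow_add, ← zpow_natCast, ← zpow_natCast,
      ← zpow_add₀ q_ne_zero]
    congr 1
    push_cast
    rw [hk]
    ring
  rw [neg_pow (q ^ 2)]
  linear_combination (-1) ^ l * gaussBinom (q ^ 4) (m + r) m * gaussBinom (q ^ 4) (l + n) l *
    qDesc (q ^ 4) (k + n) m * hq

open Finset in
theorem S₃_ket₃_eq_normal_ordered (i j k : ℕ) : q ^ (2 * i * j) • S₃ (ket₃ i j k) =
    ((shiftZ + shiftW) ^ i * ((-q ^ 2) • shiftX + shiftY) ^ j) (ket₃ 0 0 k) := by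
  have hXY : ((-q ^ 2) • shiftX) * shiftY = q ^ 4 • (shiftY * ((-q ^ 2) • shiftX)) := by
    rw [smul_mul_assoc, shiftX_mul_shiftY, mul_smul_comm, smul_comm]
  have expand_ZW := add_pow_of_mul_eq_smul_mul (R := Fq) (A := Module.End Fq ((Fin 3 → ℕ) →₀ Fq))
    shiftZ_mul_shiftW i
  have expand_XY := add_pow_of_mul_eq_smul_mul (R := Fq) (A := Module.End Fq ((Fin 3 → ℕ) →₀ Fq))
    hXY j
  rw [expand_ZW, expand_XY, sum_mul_sum, Nat.sum_antidiagonal_eq_sum_range_succ_mk, sum_comm,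
    Nat.sum_antidiagonal_eq_sum_range_succ_mk, S₃_ket₃, smul_sum, LinearMap.sum_apply]
  refine sum_congr rfl fun l hl => ?_
  rw [smul_sum, LinearMap.sum_apply]
  refine sum_congr rfl fun m hm => ?_
  obtain ⟨n, rfl⟩ := Nat.exists_eq_add_of_le (mem_range_succ_iff.1 hl)
  obtain ⟨r, rfl⟩ := Nat.exists_eq_add_of_le (mem_range_succ_iff.1 hm)
  simp only [add_tsub_cancel_left]
  rw [smul_mul_smul_comm, LinearMap.smul_apply, monomial_ket₃, smul_smul, smul_smul,
    q_pow_mul_sTerm]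
  congr 2 <;> lia

end SBraid

section CellBraid

open Subsystem

variable {α β : Fq}

/-- The reduced word `s₂s₁s₂` of type `A₂`, on three tensor factors. -/
abbrev word₂₁₂ : List (Fin 2 × Fin 3) := [(1, 0), (0, 1), (1, 2)]

/-- The reduced word `s₁s₂s₁` of type `A₂`, with the tensor factors in reverse order. -/
abbrev word₁₂₁ : List (Fin 2 × Fin 3) := [(0, 2), (1, 1), (0, 0)]

theorem word₂₁₂_two_one : word (cell Am Ap K2 α β) word₂₁₂ 2 1 = β • (shiftZ + shiftW) := by
  simp [cell, Matrix.mul_apply, Fin.sum_univ_three, shiftZ, shiftW, mul_assoc]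

theorem word₂₁₂_two_two (h : α * β = -q ^ 2) :
    word (cell Am Ap K2 α β) word₂₁₂ 2 2 = (-q ^ 2) • shiftX + shiftY := by
  simp [cell, Matrix.mul_apply, Fin.sum_univ_three, shiftX, shiftY, mul_assoc, smul_smul, ← h]

theorem word₁₂₁_two_one : word (cell Am Ap K2 α β) word₁₂₁ 2 1 =
    β • ((site ℕ 1).op K2 * (site ℕ 0).op Ap) := by
  simp [cell, Matrix.mul_apply, Fin.sum_univ_three]

theorem word₁₂₁_two_two :
    word (cell Am Ap K2 α β) word₁₂₁ 2 2 = (site ℕ 1).op Ap := by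
  simp [cell, Matrix.mul_apply, Fin.sum_univ_three]

theorem word₁₂₁_last_row_ket₃ (i j k : ℕ) :
    (word (cell Am Ap K2 α β) word₁₂₁ 2 1 ^ i * word (cell Am Ap K2 α β) word₁₂₁ 2 2 ^ j)
      (ket₃ 0 0 k) = (β ^ i * q ^ (2 * i * j)) • ket₃ i j k := by
  have raise (j : ℕ) : (word (cell Am Ap K2 α β) word₁₂₁ 2 2 ^ j) (ket₃ 0 0 k) = ket₃ 0 j k := by
    induction j with
    | zero => simp
    | succ j ih =>
      rw [pow_succ', Module.End.mul_apply, ih, word₁₂₁_two_two]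
      simp [Ap]
  induction i with
  | zero => rw [pow_zero, one_mul, raise]; simp
  | succ i ih =>
    rw [pow_succ', mul_assoc, Module.End.mul_apply, ih, word₁₂₁_two_one]
    simp only [LinearMap.smul_apply, Module.End.mul_apply, map_smul, site_zero_op_ket₃, Ap,
      opOf_ket, Finsupp.lmapDomain_apply, mapDomain_zero_ket, site_one_op_ket₃, K2,
      mapDomain_one_ket, smul_smul]
    ring_nf

theorem span_word₁₂₁_last_row_ket₃ (hβ : β ≠ 0) :
    Submodule.span Fq (Set.range fun x : ℕ × ℕ × ℕ =>
      (word (cell Am Ap K2 α β) word₁₂₁ 2 1 ^ x.1 * word (cell Am Ap K2 α β) word₁₂₁ 2 2 ^ x.2.1)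
        (ket₃ 0 0 x.2.2)) = ⊤ := by
  simp only [word₁₂₁_last_row_ket₃]
  rw [← top_le_iff, ← (Finsupp.basisSingleOne (R := Fq)).span_eq, Submodule.span_le]
  rintro _ ⟨f, rfl⟩
  have hf : single f 1 = ket₃ (f 0) (f 1) (f 2) := by
    rw [ket₃]; congr; ext i; fin_cases i <;> rfl
  rw [Finsupp.coe_basisSingleOne]
  beta_reduce
  rw [hf, ← inv_smul_smul₀ (mul_ne_zero (pow_ne_zero (f 0) hβ) (pow_ne_zero _ q_ne_zero))
    (ket₃ (f 0) (f 1) (f 2))]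
  exact Submodule.smul_mem _ _ (Submodule.subset_span ⟨(f 0, f 1, f 2), rfl⟩)

theorem S₃_ket₃_zero_zero (k : ℕ) : S₃ (ket₃ 0 0 k) = ket₃ 0 0 k := by
  simpa using S₃_ket₃_eq_normal_ordered 0 0 k

theorem S₃_word₁₂₁_ket₃_zero_zero (h : α * β = -q ^ 2) (i c : Fin 3) (k : ℕ) :
    S₃ (word (cell Am Ap K2 α β) word₁₂₁ i c (ket₃ 0 0 k)) =
      word (cell Am Ap K2 α β) word₂₁₂ i c (ket₃ 0 0 k) := by
  have h₁₀ : S₃ (ket₃ 1 0 k) = (shiftZ + shiftW) (ket₃ 0 0 k) := by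
    simpa using S₃_ket₃_eq_normal_ordered 1 0 k
  have h₀₁ : S₃ (ket₃ 0 1 k) = ((-q ^ 2) • shiftX + shiftY) (ket₃ 0 0 k) := by
    simpa using S₃_ket₃_eq_normal_ordered 0 1 k
  fin_cases i <;> fin_cases c <;>
    simp [cell, Matrix.mul_apply, Fin.sum_univ_three, Am, Ap, K2, S₃_ket₃_zero_zero, smul_smul,
      h₁₀, h₀₁, shiftZ_ket₃, shiftW_ket₃, shiftX_ket₃, shiftY_ket₃, h, mul_comm β α]

theorem intertwines_S₃_word₁₂₁ (h : α * β = -q ^ 2) :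
    Intertwines S₃ (word (cell Am Ap K2 α β) word₂₁₂) (word (cell Am Ap K2 α β) word₁₂₁) := by
  have hp : q ^ 2 ≠ 0 := pow_ne_zero 2 q_ne_zero
  have hcell := isQuantumMatrix_cell isOscillator_Am_Ap_K2 hp h
  have hβ : β ≠ 0 := by rintro rfl; simp [q_ne_zero] at h
  refine intertwines_of_ordered_span hp (isQuantumMatrix_word hcell (by decide))
    (isQuantumMatrix_word hcell (by decide)) (span_word₁₂₁_last_row_ket₃ hβ) (fun i j k => ?_)
    (S₃_word₁₂₁_ket₃_zero_zero h)
  rw [word₁₂₁_last_row_ket₃, map_smul, ← smul_smul, S₃_ket₃_eq_normal_ordered, word₂₁₂_two_one,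
    word₂₁₂_two_two h, smul_pow, smul_mul_assoc, LinearMap.smul_apply]

theorem word_comp {R ι κ κ' σ m : Type*} [CommSemiring R] [Fintype m] [DecidableEq m]
    [DecidableEq ι] (T : κ → Matrix m m (Module.End R (σ →₀ R))) (f : κ' → κ)
    (w : List (κ' × ι)) : word (T ∘ f) w = word T (w.map (Prod.map f id)) := by
  simp [word, Function.comp_def]

/-- The second compound exchanges the two fundamental representations of `SL₃`, hence the two
simple reflections. -/
theorem intertwines_S₃_word_rev (h : α * β = -q ^ 2) :
    Intertwines S₃ (word (cell Am Ap K2 α β) [(0, 0), (1, 1), (0, 2)])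
      (word (cell Am Ap K2 α β) [(1, 2), (0, 1), (1, 0)]) := by
  have hp : q ^ 2 ≠ 0 := pow_ne_zero 2 q_ne_zero
  have hcell := isQuantumMatrix_cell isOscillator_Am_Ap_K2 hp h
  have relabel (w : List (Fin 2 × Fin 3)) (hw : (w.map Prod.snd).Nodup) :
      compound (q ^ 2) (word (cell Am Ap K2 α β) w) =
        word (cell Am Ap K2 α β) (w.map (Prod.map Fin.rev id)) := by
    rw [compound_word hp hcell hw, ← word_comp]
    exact congrArg (word · w) (funext (compound_cell isOscillator_Am_Ap_K2 h))
  have hcompound := Intertwines.compound (K := Fq) (A := Module.End Fq ((Fin 3 → ℕ) →₀ Fq))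
    (p := q ^ 2) (intertwines_S₃_word₁₂₁ h)
  rwa [relabel _ (by decide), relabel _ (by decide)] at hcompound

end CellBraid

section Placement

open Subsystem

theorem upd3'_eq_extend {p₁ p₂ p₃ : Fin 9} (h : Function.Injective ![p₁, p₂, p₃]) (f : Fin 9 → ℕ)
    (a b c : ℕ) : upd3' f p₁ p₂ p₃ a b c = Function.extend ![p₁, p₂, p₃] ![a, b, c] f := by
  have hp : [p₁, p₂, p₃].Nodup := by simpa using List.nodup_ofFn.2 h
  simp only [List.nodup_cons, List.mem_cons, not_or] at hp
  ext r
  by_cases hr : ∃ i, ![p₁, p₂, p₃] i = r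
  · obtain ⟨i, rfl⟩ := hr
    rw [h.extend_apply]
    fin_cases i <;> simp [upd3', hp]
  · have outside (i : Fin 3) : r ≠ ![p₁, p₂, p₃] i := fun hi => hr ⟨i, hi.symm⟩
    rw [Function.extend_apply' _ _ _ hr]
    exact (Function.update_of_ne (outside 2) _ _).trans <|
      (Function.update_of_ne (outside 1) _ _).trans <| Function.update_of_ne (outside 0) _ _

theorem upd4'_eq_extend {p₁ p₂ p₃ p₄ : Fin 9} (h : Function.Injective ![p₁, p₂, p₃, p₄])
    (f : Fin 9 → ℕ) (a b c d : ℕ) : upd4' f p₁ p₂ p₃ p₄ a b c d =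
      Function.extend ![p₁, p₂, p₃, p₄] ![a, b, c, d] f := by
  have hp : [p₁, p₂, p₃, p₄].Nodup := by simpa using List.nodup_ofFn.2 h
  simp only [List.nodup_cons, List.mem_cons, not_or] at hp
  ext r
  by_cases hr : ∃ i, ![p₁, p₂, p₃, p₄] i = r
  · obtain ⟨i, rfl⟩ := hr
    rw [h.extend_apply]
    fin_cases i <;> simp [upd4', hp]
  · have outside (i : Fin 4) : r ≠ ![p₁, p₂, p₃, p₄] i := fun hi => hr ⟨i, hi.symm⟩
    rw [Function.extend_apply' _ _ _ hr]
    exact (Function.update_of_ne (outside 3) _ _).trans <|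
      (Function.update_of_ne (outside 2) _ _).trans <|
      (Function.update_of_ne (outside 1) _ _).trans <| Function.update_of_ne (outside 0) _ _

theorem mapDomain_write_injective {C D : Type*} (L : Subsystem C D) (c : C) :
    Function.Injective (lmapDomain Fq Fq (L.write · c)).toAddMonoidHom :=
  Finsupp.mapDomain_injective (Function.LeftInverse.injective (g := L.read) (L.read_write · c))

theorem S9_eq_atPos (p₁ p₂ p₃ : Fin 9) (h : Function.Injective ![p₁, p₂, p₃]) :
    S9 p₁ p₂ p₃ = atPos S₃ ![p₁, p₂, p₃] h := by
  ext1 f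
  apply LinearMap.ext_ring
  have image : S9 p₁ p₂ p₃ (single f 1) =
      ∑ᶠ (a) (b) (c), (lmapDomain Fq Fq ((sites ℕ ⟨_, h⟩).write · f)).toAddMonoidHom
        (Scoef a b c (f p₁) (f p₂) (f p₃) • single ![a, b, c] 1) := by
    simp [S9, upd3'_eq_extend h, sites, Finsupp.mapDomain_single]
  rw [LinearMap.comp_apply, LinearMap.comp_apply, Finsupp.lsingle_apply, op_single, image]
  simp only [← AddMonoidHom.map_finsum_of_injective _ (mapDomain_write_injective _ f)]
  simp [S₃]

/-- The operator with matrix elements `Jc` on `F ⊗ F ⊗ F ⊗ F`, in the coordinates of the basis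
`|a⟩ ⊗ |b⟩ ⊗ |c⟩ ⊗ |d⟩`. -/
def J₄ (Jc : ℕ → ℕ → ℕ → ℕ → ℕ → ℕ → ℕ → ℕ → Fq) : Module.End Fq ((Fin 4 → ℕ) →₀ Fq) :=
  Finsupp.lift _ Fq _ fun f =>
    ∑ᶠ (a) (b) (c) (d), Jc a b c d (f 0) (f 1) (f 2) (f 3) • single ![a, b, c, d] 1

theorem J9_eq_atPos (Jc : ℕ → ℕ → ℕ → ℕ → ℕ → ℕ → ℕ → ℕ → Fq) (p₁ p₂ p₃ p₄ : Fin 9)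
    (h : Function.Injective ![p₁, p₂, p₃, p₄]) :
    J9 Jc p₁ p₂ p₃ p₄ = atPos (J₄ Jc) ![p₁, p₂, p₃, p₄] h := by
  ext1 f
  apply LinearMap.ext_ring
  have image : J9 Jc p₁ p₂ p₃ p₄ (single f 1) =
      ∑ᶠ (a) (b) (c) (d), (lmapDomain Fq Fq ((sites ℕ ⟨_, h⟩).write · f)).toAddMonoidHom
        (Jc a b c d (f p₁) (f p₂) (f p₃) (f p₄) • single ![a, b, c, d] 1) := by
    simp [J9, upd4'_eq_extend h, sites, Finsupp.mapDomain_single]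
  rw [LinearMap.comp_apply, LinearMap.comp_apply, Finsupp.lsingle_apply, op_single, image]
  simp only [← AddMonoidHom.map_finsum_of_injective _ (mapDomain_write_injective _ f)]
  simp [J₄]

end Placement

/-- The block diagonal matrix with the two given diagonal blocks. -/
def blockSum {A : Type*} [Zero A] {m n : ℕ} (M : Matrix (Fin m) (Fin m) A)
    (N : Matrix (Fin n) (Fin n) A) : Matrix (Fin (m + n)) (Fin (m + n)) A :=
  (Matrix.fromBlocks M 0 0 N).submatrix finSumFinEquiv.symm finSumFinEquiv.symm

local infixl:65 " ⊕ₘ " => blockSum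

section BlockMatrices

variable {A B : Type*} [Semiring A] [Semiring B] {m n : ℕ}

theorem blockSum_mul (M M' : Matrix (Fin m) (Fin m) A) (N N' : Matrix (Fin n) (Fin n) A) :
    (M ⊕ₘ N) * (M' ⊕ₘ N') = (M * M') ⊕ₘ (N * N') := by
  simp [blockSum, Matrix.submatrix_mul_equiv, Matrix.fromBlocks_multiply]

theorem blockSum_one : (1 : Matrix (Fin m) (Fin m) A) ⊕ₘ (1 : Matrix (Fin n) (Fin n) A) = 1 := by
  simp [blockSum]

theorem blockSum_map {G : Type*} [FunLike G A B] [ZeroHomClass G A B]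
    (M : Matrix (Fin m) (Fin m) A) (N : Matrix (Fin n) (Fin n) A) (f : G) :
    (M ⊕ₘ N).map f = M.map f ⊕ₘ N.map f := by
  simp [blockSum, Matrix.fromBlocks_map, ← Matrix.submatrix_map]

theorem Intertwines.blockSum {X : A} {M M' : Matrix (Fin m) (Fin m) A}
    {N N' : Matrix (Fin n) (Fin n) A} (hM : Intertwines X M M') (hN : Intertwines X N N') :
    Intertwines X (M ⊕ₘ N) (M' ⊕ₘ N') := fun i j => by
  cases i using Fin.addCases <;> cases j using Fin.addCases <;>
    simp [_root_.blockSum, hM _ _, hN _ _]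

theorem word_blockSum {R ι κ σ : Type*} [CommSemiring R] [DecidableEq ι]
    (T : κ → Matrix (Fin m) (Fin m) (Module.End R (σ →₀ R)))
    (U : κ → Matrix (Fin n) (Fin n) (Module.End R (σ →₀ R))) (w : List (κ × ι)) :
    word (fun k => T k ⊕ₘ U k) w = word T w ⊕ₘ word U w := by
  induction w with
  | nil => exact blockSum_one.symm
  | cons x w ih => simp only [word_cons, ih, blockSum_map, blockSum_mul]

theorem word_const_one {R ι κ σ : Type*} [CommSemiring R] [DecidableEq ι] (w : List (κ × ι)) :
    word (fun _ => (1 : Matrix (Fin n) (Fin n) (Module.End R (σ →₀ R)))) w = 1 := by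
  induction w with
  | nil => rfl
  | cons x w ih => rw [word_cons, ih, Matrix.map_one _ (map_zero _) (map_one _), one_mul]

theorem blockSum_outer_mul_inner {l : ℕ} {G : Type*} [FunLike G A B] [RingHomClass G A B] (f g : G)
    (M : Matrix (Fin l) (Fin l) A) (N : Matrix (Fin m) (Fin m) A) (M' : Matrix (Fin n) (Fin n) A) :
    (M ⊕ₘ 1 ⊕ₘ M').map f * (1 ⊕ₘ N ⊕ₘ 1).map g = (1 ⊕ₘ N ⊕ₘ 1).map g * (M ⊕ₘ 1 ⊕ₘ M').map f := by
  simp only [blockSum_map, blockSum_mul, Matrix.map_one, map_zero, map_one, one_mul, mul_one]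

variable {α β : Fq}

theorem q_sq_mul_inv_right (h : α * β = -q ^ 2) : q ^ 2 * β⁻¹ = -α := by
  have hβ : β ≠ 0 := by rintro rfl; simp [q_ne_zero] at h
  field_simp
  linear_combination h

theorem pi1_eq_blockSum_cell (h : α * β = -q ^ 2) : pi1 α β 1 1 1 1 =
    cell Am Ap K2 α β 0 ⊕ₘ (1 : Matrix (Fin 1) (Fin 1) (Module.End Fq F)) ⊕ₘ
      cell Am Ap K2 (-α) (-β) 1 := by
  simp only [pi1, inv_one, one_smul, q_sq_mul_inv_right h, q_sq_mul_inv_right (mul_comm β α ▸ h)]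
  ext1 i j
  fin_cases i <;> fin_cases j <;> rfl

theorem pi2_eq_blockSum_cell (h : α * β = -q ^ 2) : pi2 α β 1 1 1 1 =
    cell Am Ap K2 α β 1 ⊕ₘ (1 : Matrix (Fin 1) (Fin 1) (Module.End Fq F)) ⊕ₘ
      cell Am Ap K2 (-α) (-β) 0 := by
  simp only [pi2, inv_one, one_smul, q_sq_mul_inv_right h, q_sq_mul_inv_right (mul_comm β α ▸ h)]
  ext1 i j
  fin_cases i <;> fin_cases j <;> rfl

theorem pi3_eq_blockSum_orthogonalCell (γ : Fq) : pi3 γ 1 1 1 =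
    (1 : Matrix (Fin 2) (Fin 2) (Module.End Fq F)) ⊕ₘ orthogonalCell q am ap kk γ ⊕ₘ
      (1 : Matrix (Fin 2) (Fin 2) (Module.End Fq F)) := by
  simp only [pi3, inv_one, one_smul, mul_one]
  ext1 i j
  fin_cases i <;> fin_cases j <;> rfl

/-- The representations `π₁`, `π₂`, `π₃` of the quantized coordinate ring of type `B₃`, given by
the images of its generators. -/
def simpleRep (α β γ : Fq) : Fin 3 → Matrix (Fin 7) (Fin 7) (Module.End Fq F) :=
  ![pi1 α β 1 1 1 1, pi2 α β 1 1 1 1, pi3 γ 1 1 1]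

variable {γ : Fq}

theorem word_simpleRep_commute {ι : Type*} [DecidableEq ι] (p r : ι) :
    word (simpleRep α β γ) [(0, p), (2, r)] = word (simpleRep α β γ) [(2, r), (0, p)] := by
  have h₁ : simpleRep α β γ 0 = !![(Am : Module.End Fq F), α • K2; β • K2, Ap] ⊕ₘ
      (1 : Matrix (Fin 3) (Fin 3) (Module.End Fq F)) ⊕ₘ
      !![(Am : Module.End Fq F), (q ^ 2 * β⁻¹) • K2; (q ^ 2 * α⁻¹) • K2, Ap] := by
    simp only [simpleRep, Matrix.cons_val_zero, pi1, inv_one, one_smul]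
    ext1 i j
    fin_cases i <;> fin_cases j <;> rfl
  have h₃ : simpleRep α β γ 2 = _ := pi3_eq_blockSum_orthogonalCell γ
  simp only [word_cons, word_nil, mul_one, h₁, h₃]
  exact blockSum_outer_mul_inner _ _ _ _ _

theorem simpleRep_castSucc (h : α * β = -q ^ 2) (n : Fin 2) : simpleRep α β γ n.castSucc =
    cell Am Ap K2 α β n ⊕ₘ (1 : Matrix (Fin 1) (Fin 1) (Module.End Fq F)) ⊕ₘ
      cell Am Ap K2 (-α) (-β) n.rev := by
  fin_cases n
  · exact pi1_eq_blockSum_cell h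
  · exact pi2_eq_blockSum_cell h

theorem word_simpleRep_castSucc (h : α * β = -q ^ 2) {ι : Type*} [DecidableEq ι]
    (w : List (Fin 2 × ι)) : word (simpleRep α β γ) (w.map (Prod.map Fin.castSucc id)) =
      word (cell Am Ap K2 α β) w ⊕ₘ
        (1 : Matrix (Fin 1) (Fin 1) (Module.End Fq ((ι → ℕ) →₀ Fq))) ⊕ₘ
        word (cell Am Ap K2 (-α) (-β)) (w.map (Prod.map Fin.rev id)) := by
  rw [← word_comp, ← word_comp, ← word_const_one w, ← word_blockSum, ← word_blockSum]
  exact congrArg (word · w) (funext (simpleRep_castSucc h))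

theorem intertwines_S₃_simpleRep (h : α * β = -q ^ 2) {w w' : List (Fin 2 × Fin 3)}
    (hw : ∀ {α β : Fq}, α * β = -q ^ 2 →
      Intertwines S₃ (word (cell Am Ap K2 α β) w) (word (cell Am Ap K2 α β) w'))
    (hrev : ∀ {α β : Fq}, α * β = -q ^ 2 →
      Intertwines S₃ (word (cell Am Ap K2 α β) (w.map (Prod.map Fin.rev id)))
        (word (cell Am Ap K2 α β) (w'.map (Prod.map Fin.rev id)))) :
    Intertwines S₃ (word (simpleRep α β γ) (w.map (Prod.map Fin.castSucc id)))
      (word (simpleRep α β γ) (w'.map (Prod.map Fin.castSucc id))) := by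
  rw [word_simpleRep_castSucc h, word_simpleRep_castSucc h]
  exact ((hw h).blockSum (.one _)).blockSum (hrev (neg_mul_neg α β ▸ h))

end BlockMatrices

section Reordering

open Subsystem

variable {R ι κ σ m : Type*} [CommSemiring R] [Fintype m] [DecidableEq m] [DecidableEq ι]

/-- The operator permuting the tensor factors of a tensor power: it moves the factor at `p` to
`e p`. -/
def permuteFactors (e : Equiv.Perm ι) : Module.End R ((ι → σ) →₀ R) :=
  lmapDomain R R (· ∘ e.symm)

theorem semiconjBy_permuteFactors (e : Equiv.Perm ι) (p : ι) (X : Module.End R (σ →₀ R)) :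
    SemiconjBy (permuteFactors e) ((site σ p).op X) ((site σ (e p)).op X) := by
  ext1 f
  apply LinearMap.ext_ring
  simp [permuteFactors, Finsupp.mapDomain_single, op_single, ← Finsupp.mapDomain_comp,
    Function.comp_def, Function.update_apply_equiv_apply]
  rfl

theorem intertwines_permuteFactors (T : κ → Matrix m m (Module.End R (σ →₀ R)))
    (e : Equiv.Perm ι) (w : List (κ × ι)) :
    Intertwines (permuteFactors e) (word T (w.map (Prod.map id e))) (word T w) := by
  induction w with
  | nil => exact .one _
  | cons x w ih =>
    rw [List.map_cons, word_cons, word_cons]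
    exact .mul (fun i j => semiconjBy_permuteFactors e x.2 _) ih

end Reordering

section TensorCoordinates

open Subsystem

/-- Coordinates on a tensor power of the Fock space, one factor at a time. -/
def fockCons (n : ℕ) : F ⊗[Fq] ((Fin n → ℕ) →₀ Fq) ≃ₗ[Fq] (Fin (n + 1) → ℕ) →₀ Fq :=
  finsuppTensorFinsupp' Fq ℕ (Fin n → ℕ) ≪≫ₗ Finsupp.domLCongr (Fin.consEquiv fun _ => ℕ)

theorem fockCons_ket (n a : ℕ) (f : Fin n → ℕ) :
    fockCons n (ket a ⊗ₜ single f 1) = single (Matrix.vecCons a f) 1 := by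
  simp [fockCons, ket]
  rfl

theorem fockCons_tmul_single (n : ℕ) (u : F) (f : Fin n → ℕ) :
    fockCons n (u ⊗ₜ single f 1) = lmapDomain Fq Fq (Matrix.vecCons · f) u := by
  suffices h : (fockCons n).toLinearMap ∘ₗ (TensorProduct.mk Fq F _).flip (single f (1 : Fq)) =
      lmapDomain Fq Fq (Matrix.vecCons · f) from LinearMap.congr_fun h u
  ext1 a
  apply LinearMap.ext_ring
  simpa [ket] using fockCons_ket n a f

theorem fockCons_ket_tmul (n a : ℕ) (v : (Fin n → ℕ) →₀ Fq) :
    fockCons n (ket a ⊗ₜ v) = lmapDomain Fq Fq (Matrix.vecCons a) v := by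
  suffices h : (fockCons n).toLinearMap ∘ₗ TensorProduct.mk Fq F _ (ket a) =
      lmapDomain Fq Fq (Matrix.vecCons a) from LinearMap.congr_fun h v
  ext1 f
  apply LinearMap.ext_ring
  simpa using fockCons_ket n a f

theorem site_zero_write_vecCons {n : ℕ} (a b : ℕ) (f : Fin n → ℕ) :
    (site ℕ 0).write b (Matrix.vecCons a f) = Matrix.vecCons b f :=
  Fin.update_cons_zero (α := fun _ => ℕ) a f b

theorem fockCons_rTensor (n : ℕ) (X : Module.End Fq F) :
    (fockCons n).toLinearMap ∘ₗ LinearMap.rTensor _ X =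
      (site ℕ (0 : Fin (n + 1))).op X ∘ₗ (fockCons n).toLinearMap := by
  ext a f : 4
  apply LinearMap.ext_ring
  have h := fockCons_tmul_single n (X (ket a)) f
  have h' := fockCons_ket n a f
  simp only [ket] at h h'
  simp [h, h', op_single, site_zero_write_vecCons]

theorem fockCons_lTensor (n : ℕ) (Y : Module.End Fq ((Fin n → ℕ) →₀ Fq)) :
    (fockCons n).toLinearMap ∘ₗ LinearMap.lTensor _ Y =
      (sites ℕ (Fin.succEmb n)).op Y ∘ₗ (fockCons n).toLinearMap := by
  ext a f : 4
  apply LinearMap.ext_ring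
  have h := fockCons_ket_tmul n a (Y (single f 1))
  have h' := fockCons_ket n a f
  have hread : (sites ℕ (Fin.succEmb n)).read (Matrix.vecCons a f) = f := rfl
  have hwrite (g : Fin n → ℕ) :
      (sites ℕ (Fin.succEmb n)).write g (Matrix.vecCons a f) = Matrix.vecCons a g := by
    ext i
    cases i using Fin.cases with
    | zero => exact Function.extend_apply' _ _ _ fun ⟨j, hj⟩ => Fin.succ_ne_zero j hj
    | succ j => exact (Fin.succEmb n).injective.extend_apply g _ j
  simp only [ket] at h h'
  simp [h, h', op_single, hread, hwrite]

variable {n : ℕ} {V : Type*} [AddCommMonoid V] [Module Fq V]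

/-- Coordinates on `F ⊗ V` from coordinates on `V`. -/
def consCoord (e : V ≃ₗ[Fq] (Fin n → ℕ) →₀ Fq) : F ⊗[Fq] V ≃ₗ[Fq] (Fin (n + 1) → ℕ) →₀ Fq :=
  TensorProduct.congr (.refl Fq F) e ≪≫ₗ fockCons n

theorem consCoord_ket {e : V ≃ₗ[Fq] (Fin n → ℕ) →₀ Fq} {v : V} {f : Fin n → ℕ}
    (h : e v = single f 1) (a : ℕ) :
    consCoord e (ket a ⊗ₜ v) = single (Matrix.vecCons a f) 1 := by
  simp [consCoord, h, fockCons_ket]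

theorem consCoord_conj_map (e : V ≃ₗ[Fq] (Fin n → ℕ) →₀ Fq) (X : Module.End Fq F)
    (Y : Module.End Fq V) : (consCoord e).conj (TensorProduct.map X Y) =
      (site ℕ 0).op X * (sites ℕ (Fin.succEmb n)).op (e.conj Y) := by
  rw [LinearEquiv.conj_apply, LinearEquiv.comp_toLinearMap_symm_eq]
  have h : (TensorProduct.congr (.refl Fq F) e).toLinearMap ∘ₗ TensorProduct.map X Y =
      TensorProduct.map X (e.conj Y) ∘ₗ (TensorProduct.congr (.refl Fq F) e).toLinearMap := by
    ext u v
    simp [LinearEquiv.conj_apply]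
  calc
    _ = (fockCons n).toLinearMap ∘ₗ TensorProduct.map X (e.conj Y) ∘ₗ
        (TensorProduct.congr (.refl Fq F) e).toLinearMap := by rw [← h]; rfl
    _ = ((fockCons n).toLinearMap ∘ₗ LinearMap.rTensor _ X) ∘ₗ LinearMap.lTensor _ (e.conj Y) ∘ₗ
        (TensorProduct.congr (.refl Fq F) e).toLinearMap := by
      rw [← LinearMap.rTensor_comp_lTensor]; rfl
    _ = (site ℕ 0).op X ∘ₗ ((fockCons n).toLinearMap ∘ₗ LinearMap.lTensor _ (e.conj Y)) ∘ₗ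
        (TensorProduct.congr (.refl Fq F) e).toLinearMap := by rw [fockCons_rTensor]; rfl
    _ = _ := by rw [fockCons_lTensor]; rfl

/-- Coordinates on `F` as a one-fold tensor power. -/
def fockOne : F ≃ₗ[Fq] (Fin 1 → ℕ) →₀ Fq := Finsupp.domLCongr (Equiv.funUnique (Fin 1) ℕ).symm

theorem fockOne_ket (a : ℕ) : fockOne (ket a) = single ![a] 1 := by
  rw [fockOne, ket, Finsupp.domLCongr_single]
  congr
  ext i
  simp

theorem fockOne_conj (X : Module.End Fq F) : fockOne.conj X = (site ℕ 0).op X := by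
  rw [LinearEquiv.conj_apply, LinearEquiv.comp_toLinearMap_symm_eq]
  refine Finsupp.lhom_ext' fun a => LinearMap.ext_ring ?_
  have h (v : F) : fockOne v = lmapDomain Fq Fq (fun b => ![b]) v := by
    suffices h : fockOne.toLinearMap = lmapDomain Fq Fq (fun b => ![b]) from
      LinearMap.congr_fun h v
    refine Finsupp.lhom_ext' fun a => LinearMap.ext_ring ?_
    simpa [ket] using fockOne_ket a
  simp [h, Finsupp.mapDomain_single, op_single, site_zero_write_vecCons]

/-- Coordinates on `F ⊗ F ⊗ F ⊗ F`. -/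
def fockFour : F ⊗[Fq] (F ⊗[Fq] (F ⊗[Fq] F)) ≃ₗ[Fq] (Fin 4 → ℕ) →₀ Fq :=
  consCoord (consCoord (consCoord fockOne))

theorem fockFour_ket (a b c d : ℕ) :
    fockFour (ket a ⊗ₜ (ket b ⊗ₜ (ket c ⊗ₜ ket d))) = single ![a, b, c, d] 1 :=
  consCoord_ket (consCoord_ket (consCoord_ket (fockOne_ket d) c) b) a

theorem fockFour_conj_map (X Y Z W : Module.End Fq F) :
    fockFour.conj (TensorProduct.map X (TensorProduct.map Y (TensorProduct.map Z W))) =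
      (site ℕ 0).op X * ((site ℕ 1).op Y * ((site ℕ 2).op Z * (site ℕ 3).op W)) := by
  simp only [fockFour, consCoord_conj_map, fockOne_conj, map_mul, op_op, sites_trans_site]
  rfl

theorem J₄_eq {Ξ : Module.End Fq (F ⊗[Fq] (F ⊗[Fq] (F ⊗[Fq] F)))}
    {Jc : ℕ → ℕ → ℕ → ℕ → ℕ → ℕ → ℕ → ℕ → Fq}
    (hJ : ∀ i j k l, Ξ (ket l ⊗ₜ[Fq] (ket k ⊗ₜ[Fq] (ket j ⊗ₜ[Fq] ket i))) =
      ∑ᶠ (a) (b) (c) (d), Jc a b c d i j k l • (ket a ⊗ₜ[Fq] (ket b ⊗ₜ[Fq] (ket c ⊗ₜ[Fq] ket d)))) :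
    J₄ Jc = fockFour.conj Ξ * permuteFactors Fin.revPerm := by
  ext1 f
  apply LinearMap.ext_ring
  have hrev : f ∘ Fin.revPerm.symm = ![f 3, f 2, f 1, f 0] := by
    ext i; fin_cases i <;> rfl
  have hsymm : fockFour.symm (single ![f 3, f 2, f 1, f 0] 1) =
      ket (f 3) ⊗ₜ (ket (f 2) ⊗ₜ (ket (f 1) ⊗ₜ ket (f 0))) := by
    rw [← fockFour_ket, LinearEquiv.symm_apply_apply]
  have hmap (g : F ⊗[Fq] (F ⊗[Fq] (F ⊗[Fq] F))) :
      fockFour g = fockFour.toAddEquiv.toAddMonoidHom g := rfl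
  have hinj : Function.Injective fockFour.toAddEquiv.toAddMonoidHom := fockFour.injective
  have image : (fockFour.conj Ξ * permuteFactors Fin.revPerm : Module.End _ _) (single f 1) =
      fockFour (Ξ (fockFour.symm (single ![f 3, f 2, f 1, f 0] 1))) := by
    rw [Module.End.mul_apply, permuteFactors, Finsupp.lmapDomain_apply, Finsupp.mapDomain_single,
      hrev, LinearEquiv.conj_apply_apply]
  rw [LinearMap.comp_apply, LinearMap.comp_apply, Finsupp.lsingle_apply, image, hsymm, hJ, hmap]
  simp only [AddMonoidHom.map_finsum_of_injective _ hinj, ← hmap, map_smul, fockFour_ket]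
  simp [J₄]

theorem intertwines_fockFour_conj {α β γ : Fq}
    {Ξ : Module.End Fq (F ⊗[Fq] (F ⊗[Fq] (F ⊗[Fq] F)))}
    (hΞ : IsNormalizedIntertwiner α β γ Ξ) :
    Intertwines (fockFour.conj Ξ) (word (simpleRep α β γ) [(2, 0), (1, 1), (2, 2), (1, 3)])
      (word (simpleRep α β γ) [(1, 0), (2, 1), (1, 2), (2, 3)]) := fun i j => by
  have h := congrArg fockFour.conj (hΞ.2.2 i j)
  simp only [LinearEquiv.conj_comp, map_sum, fockFour_conj_map] at h
  have expand (A B C D : Matrix (Fin 7) (Fin 7) (Module.End Fq F)) :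
      word ![A, B, C, D] [(0, 0), (1, 1), (2, 2), (3, (3 : Fin 4))] i j =
      ∑ k, ∑ l, ∑ m, (site ℕ 0).op (A i k) * ((site ℕ 1).op (B k l) *
        ((site ℕ 2).op (C l m) * (site ℕ 3).op (D m j))) := by
    simp only [word_cons, word_nil, mul_one, Matrix.mul_apply, Finset.mul_sum, Matrix.map_apply,
      Matrix.cons_val]
  have hl := expand (pi3 γ 1 1 1) (pi2 α β 1 1 1 1) (pi3 γ 1 1 1) (pi2 α β 1 1 1 1)
  have hr := expand (pi2 α β 1 1 1 1) (pi3 γ 1 1 1) (pi2 α β 1 1 1 1) (pi3 γ 1 1 1)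
  exact Eq.trans (congrArg (_ * ·) hr) (h.symm.trans (congrArg (· * _) hl.symm))

variable {α β γ : Fq} {Ξ : Module.End Fq (F ⊗[Fq] (F ⊗[Fq] (F ⊗[Fq] F)))}
  {Jc : ℕ → ℕ → ℕ → ℕ → ℕ → ℕ → ℕ → ℕ → Fq}

theorem intertwines_J₄ (hΞ : IsNormalizedIntertwiner α β γ Ξ)
    (hJ : ∀ i j k l, Ξ (ket l ⊗ₜ[Fq] (ket k ⊗ₜ[Fq] (ket j ⊗ₜ[Fq] ket i))) =
      ∑ᶠ (a) (b) (c) (d), Jc a b c d i j k l • (ket a ⊗ₜ[Fq] (ket b ⊗ₜ[Fq] (ket c ⊗ₜ[Fq] ket d)))) :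
    Intertwines (J₄ Jc) (word (simpleRep α β γ) [(2, 0), (1, 1), (2, 2), (1, 3)])
      (word (simpleRep α β γ) [(1, 3), (2, 2), (1, 1), (2, 0)]) := by
  rw [J₄_eq hJ]
  exact (intertwines_fockFour_conj hΞ).trans
    (intertwines_permuteFactors _ Fin.revPerm [(1, 3), (2, 2), (1, 1), (2, 0)])

theorem J₄_single_zero (hΞ : IsNormalizedIntertwiner α β γ Ξ)
    (hJ : ∀ i j k l, Ξ (ket l ⊗ₜ[Fq] (ket k ⊗ₜ[Fq] (ket j ⊗ₜ[Fq] ket i))) =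
      ∑ᶠ (a) (b) (c) (d), Jc a b c d i j k l • (ket a ⊗ₜ[Fq] (ket b ⊗ₜ[Fq] (ket c ⊗ₜ[Fq] ket d)))) :
    J₄ Jc (single 0 1) = single 0 1 := by
  have vacuum : fockFour (ket 0 ⊗ₜ (ket 0 ⊗ₜ (ket 0 ⊗ₜ ket 0))) = single 0 1 := by
    rw [fockFour_ket]
    congr
    decide
  rw [J₄_eq hJ, Module.End.mul_apply, permuteFactors, Finsupp.lmapDomain_apply,
    Finsupp.mapDomain_single, Pi.zero_comp, LinearEquiv.conj_apply_apply, ← vacuum,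
    LinearEquiv.symm_apply_apply, hΞ.2.1]

theorem realizesBraidRelations (h : α * β = -q ^ 2) (hΞ : IsNormalizedIntertwiner α β γ Ξ)
    (hJ : ∀ i j k l, Ξ (ket l ⊗ₜ[Fq] (ket k ⊗ₜ[Fq] (ket j ⊗ₜ[Fq] ket i))) =
      ∑ᶠ (a) (b) (c) (d), Jc a b c d i j k l • (ket a ⊗ₜ[Fq] (ket b ⊗ₜ[Fq] (ket c ⊗ₜ[Fq] ket d)))) :
    RealizesBraidRelations (simpleRep α β γ) S₃ (J₄ Jc) where
  commute := word_simpleRep_commute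
  braid₁₂ := intertwines_S₃_simpleRep h (w := [(0, 0), (1, 1), (0, 2)])
    (w' := [(1, 2), (0, 1), (1, 0)]) intertwines_S₃_word_rev intertwines_S₃_word₁₂₁
  braid₂₁ := intertwines_S₃_simpleRep h (w := [(1, 0), (0, 1), (1, 2)])
    (w' := [(0, 2), (1, 1), (0, 0)]) intertwines_S₃_word₁₂₁ intertwines_S₃_word_rev
  braid₃₂ := intertwines_J₄ hΞ hJ

end TensorCoordinates

section TransposeInverse

theorem blockSum_transpose {A : Type*} [Semiring A] {m n : ℕ} (M : Matrix (Fin m) (Fin m) A)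
    (N : Matrix (Fin n) (Fin n) A) : (M ⊕ₘ N).transpose = M.transpose ⊕ₘ N.transpose := by
  simp [blockSum, Matrix.transpose_submatrix, Matrix.fromBlocks_transpose]

/-- The transpose of `T` has a right inverse. Since the entries do not commute, this differs from
`T` having a left inverse; for the representations of a quantized coordinate ring the right inverse
is provided by the antipode. -/
def TransposeInvertible {m A : Type*} [Fintype m] [DecidableEq m] [Semiring A]
    (T : Matrix m m A) : Prop :=
  ∃ U : Matrix m m A, T.transpose * U = 1

namespace TransposeInvertible

theorem one {m A : Type*} [Fintype m] [DecidableEq m] [Semiring A] :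
    TransposeInvertible (1 : Matrix m m A) := ⟨1, by simp⟩

theorem blockSum {A : Type*} [Semiring A] {m n : ℕ} {M : Matrix (Fin m) (Fin m) A}
    {N : Matrix (Fin n) (Fin n) A} (hM : TransposeInvertible M) (hN : TransposeInvertible N) :
    TransposeInvertible (M ⊕ₘ N) := by
  obtain ⟨U, hU⟩ := hM
  obtain ⟨V, hV⟩ := hN
  exact ⟨U ⊕ₘ V, by rw [blockSum_transpose, blockSum_mul, hU, hV, blockSum_one]⟩

theorem cell {K A : Type*} [Field K] [Ring A] [Algebra K A] {p α β : K} {a b k : A}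
    (hosc : IsOscillator p a b k) (hp : p ≠ 0) (h : α * β = -p) (n : Fin 2) :
    TransposeInvertible (cell a b k α β n) := by
  have hβα : β * p⁻¹ * α = -1 := by field_simp; linear_combination h
  have hαβ : α * p * β = -p ^ 2 := by linear_combination p * h
  have hka : k * a = p⁻¹ • (a * k) := by rw [hosc.lower_mul_number, inv_smul_smul₀ hp]
  refine ⟨_root_.cell b a k (-(β * p⁻¹)) (-(α * p)) n, ?_⟩
  ext i j
  fin_cases n <;> fin_cases i <;> fin_cases j <;>
    simp [_root_.cell, Matrix.mul_apply, Fin.sum_univ_three, hosc.lower_mul_raise,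
      hosc.raise_mul_lower, hosc.number_mul_raise, hka, smul_smul, hβα, hαβ]

theorem orthogonalCell {K A : Type*} [Field K] [Ring A] [Algebra K A] {p γ : K} {a b k : A}
    (h : IsOscillator p a b k) (hp : p ≠ 0) (hr : 1 + p ^ 2 ≠ 0) (hγ : γ ≠ 0) :
    TransposeInvertible (orthogonalCell p a b k γ) := by
  have hab := h.lower_mul_raise
  have hba := h.raise_mul_lower
  have hak := h.lower_mul_number
  have hbk : b * k = p⁻¹ • (k * b) := by rw [h.number_mul_raise, inv_smul_smul₀ hp]
  have hab' (x : A) : a * (b * x) = x - p ^ 2 • (k * (k * x)) := by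
    simp [← mul_assoc, hab, sub_mul]
  have hba' (x : A) : b * (a * x) = x - k * (k * x) := by
    simp [← mul_assoc, hba, sub_mul]
  have hak' (x : A) : a * (k * x) = p • (k * (a * x)) := by
    simp [← mul_assoc, hak]
  have hbk' (x : A) : b * (k * x) = p⁻¹ • (k * (b * x)) := by
    simp [← mul_assoc, hbk]
  refine ⟨.of fun i j : Fin 3 =>
    (p ^ (i : ℕ) * (p ^ (j : ℕ))⁻¹) • _root_.orthogonalCell p a b k γ i.rev j.rev, ?_⟩
  ext i j
  fin_cases i <;> fin_cases j <;>
    simp only [_root_.orthogonalCell, Matrix.mul_apply, Matrix.transpose_apply, Matrix.one_apply,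
      Fin.sum_univ_three, Matrix.of_apply, Matrix.cons_val, Fin.isValue, Fin.reduceFinMk,
      Fin.zero_eta, Fin.mk_one, Fin.reduceRev, Fin.coe_ofNat_eq_mod, Nat.reduceMod, Fin.reduceEq,
      ↓reduceIte, smul_mul_assoc, mul_smul_comm, smul_smul, mul_assoc, mul_one, one_mul, mul_sub,
      sub_mul, smul_sub, hab, hba, hak, hbk, hab', hba', hak', hbk'] <;>
    match_scalars <;> field_simp [hr] <;> ring

end TransposeInvertible

theorem one_add_q_sq_ne_zero : 1 + q ^ 2 ≠ 0 := fun h =>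
  q_pow_ne_one four_ne_zero (by linear_combination (q ^ 2 - 1) * h)

theorem transposeInvertible_simpleRep {α β γ : Fq} (h : α * β = -q ^ 2) (hγ : γ ≠ 0) (n : Fin 3) :
    TransposeInvertible (simpleRep α β γ n) := by
  have hcell {α β : Fq} (h : α * β = -q ^ 2) :=
    TransposeInvertible.cell isOscillator_Am_Ap_K2 (pow_ne_zero 2 q_ne_zero) h
  cases n using Fin.lastCases with
  | last =>
    rw [show simpleRep α β γ (Fin.last 2) = _ from pi3_eq_blockSum_orthogonalCell γ]
    exact (TransposeInvertible.one.blockSum (.orthogonalCell isOscillator_am_ap_kk q_ne_zero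
      one_add_q_sq_ne_zero hγ)).blockSum .one
  | cast n =>
    rw [simpleRep_castSucc h]
    exact ((hcell h n).blockSum .one).blockSum (hcell (neg_mul_neg α β ▸ h) n.rev)

end TransposeInverse

section Cyclicity

variable {K ι κ m : Type*} [Field K] [DecidableEq ι] [Fintype m] [LinearOrder m]

/-- In column `j`, the entry of `N` in row `k` is the topmost one that does not annihilate the
vacuum, and it fixes the vacuum up to scaling. -/
def IsPivot (N : Matrix m m (Module.End K ((ι → ℕ) →₀ K))) (k j : m) : Prop :=
  (∃ c ≠ (0 : K), N k j (single 0 1) = c • single 0 1) ∧ ∀ l < k, N l j (single 0 1) = 0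

/-- Multiplication by `T` on the left moves a pivot from row `k` to row `k'`. -/
def MovesPivot (T : Matrix m m (Module.End K (ℕ →₀ K))) (k k' : m) : Prop :=
  (∃ c ≠ (0 : K), T k' k (single 0 1) = c • single 0 1) ∧
    ∀ l ≤ k', ∀ r ≥ k, (l, r) ≠ (k', k) → T l r = 0

/-- The last nonzero entry of `T` in row `i` is a raising operator, and it lies in column `k`. -/
def Raises (T : Matrix m m (Module.End K (ℕ →₀ K))) (i k : m) : Prop :=
  (∀ n, ∃ c ≠ (0 : K), T i k (single n 1) = c • single (n + 1) 1) ∧ ∀ l > k, T i l = 0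

/-- The entries of `word T w` generate from the vacuum every state in which only the factors at the
positions of `w` are excited. -/
def Excites (T : κ → Matrix m m (Module.End K (ℕ →₀ K))) (w : List (κ × ι)) : Prop :=
  ∀ V : Submodule K ((ι → ℕ) →₀ K), single 0 1 ∈ V →
    (∀ i j, ∀ x ∈ V, word T w i j x ∈ V) →
      ∀ f : ι → ℕ, (∀ r ∉ w.map Prod.snd, f r = 0) → single f 1 ∈ V

variable {T : κ → Matrix m m (Module.End K (ℕ →₀ K))} {x : κ × ι} {w : List (κ × ι)} {i j k k' : m}

theorem word_cons_apply (i j : m) (v : (ι → ℕ) →₀ K) : word T (x :: w) i j v =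
    ∑ l, (Subsystem.site ℕ x.2).op (T x.1 i l) (word T w l j v) := by
  simp [Matrix.mul_apply]

theorem site_op_single {p : ι} {f : ι → ℕ} {X : Module.End K (ℕ →₀ K)} {c : K} {n : ℕ}
    (h : X (single (f p) 1) = c • single n 1) :
    (Subsystem.site ℕ p).op X (single f 1) = c • single (Function.update f p n) 1 := by
  rw [Subsystem.op_single, Subsystem.site_read, h, map_smul, Finsupp.lmapDomain_apply,
    Finsupp.mapDomain_single]
  rfl

theorem site_op_const_single (p : ι) (n : ℕ) (f : ι → ℕ) :
    (Subsystem.site ℕ p).op (lmapDomain K K fun _ => n) (single f 1) =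
      single (Function.update f p n) 1 := by
  simpa using site_op_single (c := 1) (f := f) (p := p)
    (X := lmapDomain K K fun _ => n) (by simp [Finsupp.mapDomain_single])

theorem isPivot_nil (j : m) : IsPivot (word T ([] : List (κ × ι))) j j :=
  ⟨⟨1, one_ne_zero, by simp⟩, fun l hl => by simp [hl.ne]⟩

theorem IsPivot.cons (h : IsPivot (word T w) k j) (hT : MovesPivot (T x.1) k k') :
    IsPivot (word T (x :: w)) k' j := by
  obtain ⟨⟨c, hc, hcv⟩, habove⟩ := h
  obtain ⟨⟨d, hd, hdv⟩, hzero⟩ := hT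
  have vanish (l r : m) (hl : l ≤ k') (hlr : (l, r) ≠ (k', k)) :
      (Subsystem.site ℕ x.2).op (T x.1 l r) (word T w r j (single 0 1)) = 0 := by
    obtain hr | hr := lt_or_ge r k
    · rw [habove r hr, map_zero]
    · rw [hzero l hl r hr hlr, map_zero, LinearMap.zero_apply]
  refine ⟨⟨c * d, mul_ne_zero hc hd, ?_⟩, fun l hl => ?_⟩
  · rw [word_cons_apply, Fintype.sum_eq_single k fun r hr => vanish k' r le_rfl (by simp [hr]),
      hcv, map_smul, site_op_single (f := 0) hdv, smul_smul]
    simp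
  · rw [word_cons_apply]
    exact Finset.sum_eq_zero fun r _ => vanish l r hl.le (by simp [hl.ne])

theorem Raises.single_mem (hT : Raises (T x.1) i k) (hpivot : IsPivot (word T w) k j)
    (hx : x.2 ∉ w.map Prod.snd) {V : Submodule K ((ι → ℕ) →₀ K)} (hvac : single 0 1 ∈ V)
    (hV : ∀ v ∈ V, word T (x :: w) i j v ∈ V) (n : ℕ) :
    single (Function.update (0 : ι → ℕ) x.2 n) 1 ∈ V := by
  obtain ⟨⟨c, hc, hcv⟩, habove⟩ := hpivot
  induction n with
  | zero => simpa using hvac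
  | succ n ih =>
    obtain ⟨d, hd, hdv⟩ := hT.1 n
    have excited (l : m) : word T w l j (single (Function.update (0 : ι → ℕ) x.2 n) 1) =
        (Subsystem.site ℕ x.2).op (lmapDomain K K fun _ => n) (word T w l j (single 0 1)) := by
      rw [← site_op_const_single]
      exact (LinearMap.congr_fun (commute_site_word hx _ l j) _).symm
    have image : word T (x :: w) i j (single (Function.update (0 : ι → ℕ) x.2 n) 1) =
        (c * d) • single (Function.update (0 : ι → ℕ) x.2 (n + 1)) 1 := by
      rw [word_cons_apply, Fintype.sum_eq_single k fun l hl => ?_]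
      · rw [excited, hcv, map_smul, site_op_const_single, map_smul,
          site_op_single (by rwa [Function.update_self]), smul_smul, Function.update_idem]
      · obtain hl | hl := hl.lt_or_gt
        · rw [excited, habove l hl, map_zero, map_zero]
        · rw [hT.2 l hl, map_zero, LinearMap.zero_apply]
    exact (V.smul_mem_iff (mul_ne_zero hc hd)).1 (image ▸ hV _ ih)

/-- The right inverse of the transpose of `T` solves for the entries of the tail of the word. -/
theorem site_op_word_apply {U : Matrix m m (Module.End K (ℕ →₀ K))}
    (hU : (T x.1).transpose * U = 1) (hx : x.2 ∉ w.map Prod.snd) (X : Module.End K (ℕ →₀ K))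
    (k j : m) (v : (ι → ℕ) →₀ K) :
    (Subsystem.site ℕ x.2).op X (word T w k j v) =
      ∑ i, word T (x :: w) i j ((Subsystem.site ℕ x.2).op (U i k * X) v) := by
  have hcomm (Y : Module.End K (ℕ →₀ K)) (l : m) (v) :
      word T w l j ((Subsystem.site ℕ x.2).op Y v) =
        (Subsystem.site ℕ x.2).op Y (word T w l j v) :=
    (LinearMap.congr_fun (commute_site_word hx Y l j) v).symm
  have hsum (l : m) : ∑ i, T x.1 i l * (U i k * X) = (1 : Matrix m m _) l k * X := by
    simp [← hU, Matrix.mul_apply, Finset.sum_mul, mul_assoc]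
  calc
    _ = ∑ l, (Subsystem.site ℕ x.2).op ((1 : Matrix m m _) l k * X) (word T w l j v) := by
      simp [Matrix.one_apply, ite_mul, apply_ite, ite_apply]
    _ = ∑ i, ∑ l, (Subsystem.site ℕ x.2).op (T x.1 i l * (U i k * X)) (word T w l j v) := by
      simp only [← hsum, map_sum, LinearMap.sum_apply]
      exact Finset.sum_comm
    _ = _ := by simp only [word_cons_apply, map_mul, Module.End.mul_apply, hcomm]

theorem excites_nil : Excites T ([] : List (κ × ι)) := fun V hvac _ f hf => by
  rwa [show f = 0 from funext fun r => hf r (by simp)]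

theorem Excites.cons (h : Excites T w) (hx : x.2 ∉ w.map Prod.snd)
    (hT : TransposeInvertible (T x.1)) (hpivot : IsPivot (word T w) k j)
    (hraise : Raises (T x.1) i k) : Excites T (x :: w) := by
  intro V hvac hV f hf
  obtain ⟨U, hU⟩ := hT
  let W := ⨅ X, V.comap ((Subsystem.site ℕ x.2).op X)
  have mem_W {v} : v ∈ W ↔ ∀ X, (Subsystem.site ℕ x.2).op X v ∈ V := by simp [W]
  have vac_mem : single 0 1 ∈ W := mem_W.2 fun X => by
    rw [Subsystem.op_single, Finsupp.lmapDomain_apply, Finsupp.mapDomain]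
    refine V.sum_mem fun n _ => ?_
    have hn := V.smul_mem (X (single 0 1) n) (hraise.single_mem hpivot hx hvac (hV i j) n)
    rwa [Finsupp.smul_single_one] at hn
  have stable (k j : m) (v) (hv : v ∈ W) : word T w k j v ∈ W := mem_W.2 fun X => by
    rw [site_op_word_apply hU hx]
    exact V.sum_mem fun i _ => hV i j _ (mem_W.1 hv _)
  have base : single (Function.update f x.2 0) 1 ∈ W := by
    refine h W vac_mem stable _ fun r hr => ?_
    obtain rfl | hrx := eq_or_ne r x.2
    · simp
    · simpa [hrx] using hf r (by simp_all)
  simpa [site_op_const_single] using mem_W.1 base (lmapDomain K K fun _ => f x.2)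

theorem Intertwines.eq_of_excites {X Y : Module.End K ((ι → ℕ) →₀ K)}
    {M : Matrix m m (Module.End K ((ι → ℕ) →₀ K))} (hX : Intertwines X M (word T w))
    (hY : Intertwines Y M (word T w)) (hw : Excites T w) (hpos : ∀ r, r ∈ w.map Prod.snd)
    (hvac : X (single 0 1) = Y (single 0 1)) : X = Y := by
  have hmem := hw (LinearMap.eqLocus X Y) hvac fun i j v (hv : X v = Y v) =>
    calc
      X (word T w i j v) = M i j (X v) := LinearMap.congr_fun (hX i j) v
      _ = M i j (Y v) := by rw [hv]
      _ = Y (word T w i j v) := (LinearMap.congr_fun (hY i j) v).symm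
  ext1 f
  exact LinearMap.ext_ring (hmem f fun r hr => absurd (hpos r) hr)

end Cyclicity

section SimpleRepresentations

variable {α β γ : Fq}

theorem smul_K2_ket_zero (c : Fq) : (c • K2 : Module.End Fq F) (ket 0) = c • ket 0 := by
  simp [K2]

theorem smul_kk_comp_kk_ket_zero (c : Fq) :
    (c • (kk ∘ₗ kk) : Module.End Fq F) (ket 0) = c • ket 0 := by
  simp [kk]

theorem movesPivot_simpleRep_zero (hβ : β ≠ 0) : MovesPivot (simpleRep α β γ 0) 6 5 := by
  refine ⟨⟨q ^ 2 * β⁻¹, by simp [q_ne_zero, hβ], smul_K2_ket_zero _⟩, fun l hl r hr h => ?_⟩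
  fin_cases l <;> fin_cases r <;> first | rfl | simp at hl hr h

theorem movesPivot_simpleRep_one (hα : α ≠ 0) (hβ : β ≠ 0) {k k' : Fin 7}
    (hk : (k, k') ∈ [(6, 6), (5, 4), (2, 1)]) : MovesPivot (simpleRep α β γ 1) k k' := by
  simp only [List.mem_cons, Prod.mk.injEq, List.not_mem_nil, or_false] at hk
  rcases hk with ⟨rfl, rfl⟩ | ⟨rfl, rfl⟩ | ⟨rfl, rfl⟩
  · refine ⟨⟨1, one_ne_zero, by simp [simpleRep, pi2]⟩, fun l hl r hr h => ?_⟩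
    fin_cases l <;> fin_cases r <;> first | rfl | simp at hl hr h
  · refine ⟨⟨q ^ 2 * β⁻¹, by simp [q_ne_zero, hβ], smul_K2_ket_zero _⟩, fun l hl r hr h => ?_⟩
    fin_cases l <;> fin_cases r <;> first | rfl | simp at hl hr h
  · refine ⟨⟨α, hα, smul_K2_ket_zero _⟩, fun l hl r hr h => ?_⟩
    fin_cases l <;> fin_cases r <;> first | rfl | simp at hl hr h

theorem movesPivot_simpleRep_two (hγ : γ ≠ 0) {k k' : Fin 7}
    (hk : (k, k') ∈ [(6, 6), (5, 5), (4, 2)]) : MovesPivot (simpleRep α β γ 2) k k' := by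
  simp only [List.mem_cons, Prod.mk.injEq, List.not_mem_nil, or_false] at hk
  rcases hk with ⟨rfl, rfl⟩ | ⟨rfl, rfl⟩ | ⟨rfl, rfl⟩
  · refine ⟨⟨1, one_ne_zero, by simp [simpleRep, pi3]⟩, fun l hl r hr h => ?_⟩
    fin_cases l <;> fin_cases r <;> first | rfl | simp at hl hr h
  · refine ⟨⟨1, one_ne_zero, by simp [simpleRep, pi3]⟩, fun l hl r hr h => ?_⟩
    fin_cases l <;> fin_cases r <;> first | rfl | simp at hl hr h
  · refine ⟨⟨_, ?_, smul_kk_comp_kk_ket_zero _⟩, fun l hl r hr h => ?_⟩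
    · simp [one_add_q_sq_ne_zero, hγ]
    · fin_cases l <;> fin_cases r <;> first | rfl | simp at hl hr h

theorem smul_Ap_ket (c : Fq) (n : ℕ) : (c • Ap : Module.End Fq F) (ket n) = c • ket (n + 1) := by
  simp [Ap]

theorem smul_kk_comp_ap_ket (c : Fq) (n : ℕ) :
    (c • (kk ∘ₗ ap) : Module.End Fq F) (ket n) = (c * q ^ (n + 1)) • ket (n + 1) := by
  simp [kk, ap, smul_smul]

theorem raises_simpleRep_zero {k : Fin 7} (hk : k ∈ ({1, 6} : Finset (Fin 7))) :
    Raises (simpleRep α β γ 0) k k := by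
  rw [Finset.mem_insert, Finset.mem_singleton] at hk
  rcases hk with rfl | rfl <;>
    refine ⟨fun n => ⟨_, ?_, smul_Ap_ket _ n⟩, fun l hl => ?_⟩
  any_goals simp
  all_goals fin_cases l <;> first | rfl | simp at hl

theorem raises_simpleRep_one {k : Fin 7} (hk : k ∈ ({2, 5} : Finset (Fin 7))) :
    Raises (simpleRep α β γ 1) k k := by
  rw [Finset.mem_insert, Finset.mem_singleton] at hk
  rcases hk with rfl | rfl <;>
    refine ⟨fun n => ⟨_, ?_, smul_Ap_ket _ n⟩, fun l hl => ?_⟩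
  any_goals simp
  all_goals fin_cases l <;> first | rfl | simp at hl

theorem raises_simpleRep_two (hγ : γ ≠ 0) : Raises (simpleRep α β γ 2) 3 4 := by
  refine ⟨fun n => ⟨_, ?_, smul_kk_comp_ap_ket _ n⟩, fun l hl => ?_⟩
  · simp [q_ne_zero, hγ]
  · fin_cases l <;> first | rfl | simp at hl

/-- The word is reduced for the longest element of the Weyl group of type `B₃`; every letter gets
its own column in which the tail of the word has a pivot that the letter raises. -/
theorem excites_simpleRep (h : α * β = -q ^ 2) (hγ : γ ≠ 0) :
    Excites (simpleRep α β γ) [s₁ 8, s₂ 7, s₃ 6, s₂ 5, s₁ 4, s₂ 3, s₃ 2, s₂ 1, s₃ 0] := by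
  have hα : α ≠ 0 := by rintro rfl; simp [q_ne_zero] at h
  have hβ : β ≠ 0 := by rintro rfl; simp [q_ne_zero] at h
  have move₁ : MovesPivot (simpleRep α β γ 0) 6 5 := movesPivot_simpleRep_zero hβ
  have move₂ {k k'} (hk) := movesPivot_simpleRep_one (γ := γ) hα hβ (k := k) (k' := k') hk
  have move₃ {k k'} (hk) := movesPivot_simpleRep_two (α := α) (β := β) hγ (k := k) (k' := k') hk
  have raise₁ {k} (hk) := raises_simpleRep_zero (α := α) (β := β) (γ := γ) (k := k) hk
  have raise₂ {k} (hk) := raises_simpleRep_one (α := α) (β := β) (γ := γ) (k := k) hk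
  have raise₃ := raises_simpleRep_two (α := α) (β := β) hγ
  have inv := transposeInvertible_simpleRep h hγ
  generalize simpleRep α β γ = T at *
  have pivot₁ : IsPivot (word T [s₃ 0]) 5 5 := (isPivot_nil 5).cons (move₃ (by decide))
  have pivot₂ : IsPivot (word T [s₂ 1, s₃ 0]) 4 5 := pivot₁.cons (move₂ (by decide))
  have pivot₃ : IsPivot (word T [s₃ 2, s₂ 1, s₃ 0]) 2 5 := pivot₂.cons (move₃ (by decide))
  have pivot₄ : IsPivot (word T [s₂ 3, s₃ 2, s₂ 1, s₃ 0]) 6 6 :=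
    have fixed₂ : MovesPivot (T 1) 6 6 := move₂ (by decide)
    have fixed₃ : MovesPivot (T 2) 6 6 := move₃ (by decide)
    ((((isPivot_nil 6).cons fixed₃).cons fixed₂).cons fixed₃).cons fixed₂
  have pivot₅ : IsPivot (word T [s₁ 4, s₂ 3, s₃ 2, s₂ 1, s₃ 0]) 5 6 := pivot₄.cons move₁
  have pivot₆ : IsPivot (word T [s₂ 5, s₁ 4, s₂ 3, s₃ 2, s₂ 1, s₃ 0]) 4 6 :=
    pivot₅.cons (move₂ (by decide))
  have pivot₇ : IsPivot (word T [s₃ 6, s₂ 5, s₁ 4, s₂ 3, s₃ 2, s₂ 1, s₃ 0]) 2 6 :=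
    pivot₆.cons (move₃ (by decide))
  have pivot₈ : IsPivot (word T [s₂ 7, s₃ 6, s₂ 5, s₁ 4, s₂ 3, s₃ 2, s₂ 1, s₃ 0]) 1 6 :=
    pivot₇.cons (move₂ (by decide))
  refine .cons ?_ (by decide) (inv 0) pivot₈ (raise₁ (by decide))
  refine .cons ?_ (by decide) (inv 1) pivot₇ (raise₂ (by decide))
  refine .cons ?_ (by decide) (inv 2) pivot₆ raise₃
  refine .cons ?_ (by decide) (inv 1) pivot₅ (raise₂ (by decide))
  refine .cons ?_ (by decide) (inv 0) pivot₄ (raise₁ (by decide))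
  refine .cons ?_ (by decide) (inv 1) pivot₃ (raise₂ (by decide))
  refine .cons ?_ (by decide) (inv 2) pivot₂ raise₃
  refine .cons ?_ (by decide) (inv 1) pivot₁ (raise₂ (by decide))
  exact .cons excites_nil (by decide) (inv 2) (isPivot_nil 4) raise₃

end SimpleRepresentations

section Vacuum

variable {σ K ι : Type*} [Zero σ] [CommSemiring K]

theorem atPos_single_zero {n : ℕ} {X : Module.End K ((Fin n → σ) →₀ K)}
    (hX : X (single 0 1) = single 0 1) {p : Fin n → ι} (hp : p.Injective) :
    atPos X p hp (single (0 : ι → σ) 1) = single 0 1 := by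
  have read_zero : (Subsystem.sites σ ⟨p, hp⟩).read 0 = 0 := rfl
  rw [atPos, Subsystem.op_single, read_zero, hX, Finsupp.lmapDomain_apply,
    Finsupp.mapDomain_single]
  congr 1
  exact Subsystem.write_read _ 0

theorem S₃_single_zero : S₃ (single 0 1) = single 0 1 := by
  have vacuum : ket₃ 0 0 0 = single 0 1 := by rw [ket₃]; congr 1; decide
  rw [← vacuum, S₃_ket₃_zero_zero]

end Vacuum

/-- Main result: the 3D reflection equation
𝒮₄₅₆ 𝒮₄₈₉ 𝒥₃₅₇₉ 𝒮₂₆₉ 𝒮₂₅₈ 𝒥₁₆₇₈ 𝒥₁₂₃₄ = 𝒥₁₂₃₄ 𝒥₁₆₇₈ 𝒮₂₅₈ 𝒮₂₆₉ 𝒥₃₅₇₉ 𝒮₄₈₉ 𝒮₄₅₆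
on F^{⊗9} (positions written 0-based). -/
theorem threeD_reflection_equation
    (α₂ β₂ α₃ : Fq) (hα₂ : α₂ ≠ 0) (hβ₂ : β₂ ≠ 0) (hαβ : α₂ * β₂ = -q ^ 2) (hα₃ : α₃ ≠ 0)
    (Ξ : F ⊗[Fq] (F ⊗[Fq] (F ⊗[Fq] F)) →ₗ[Fq] F ⊗[Fq] (F ⊗[Fq] (F ⊗[Fq] F)))
    (hΞ : IsNormalizedIntertwiner α₂ β₂ α₃ Ξ)
    (Jc : ℕ → ℕ → ℕ → ℕ → ℕ → ℕ → ℕ → ℕ → Fq)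
    (hJ : ∀ i j k l : ℕ,
      Ξ (ket l ⊗ₜ[Fq] (ket k ⊗ₜ[Fq] (ket j ⊗ₜ[Fq] ket i)))
        = ∑ᶠ a : ℕ, ∑ᶠ b : ℕ, ∑ᶠ c : ℕ, ∑ᶠ d : ℕ,
            Jc a b c d i j k l • (ket a ⊗ₜ[Fq] (ket b ⊗ₜ[Fq] (ket c ⊗ₜ[Fq] ket d)))) :
    S9 3 4 5 ∘ₗ S9 3 7 8 ∘ₗ J9 Jc 2 4 6 8 ∘ₗ S9 1 5 8 ∘ₗ S9 1 4 7 ∘ₗ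
        J9 Jc 0 5 6 7 ∘ₗ J9 Jc 0 1 2 3
      = J9 Jc 0 1 2 3 ∘ₗ J9 Jc 0 5 6 7 ∘ₗ S9 1 4 7 ∘ₗ S9 1 5 8 ∘ₗ
          J9 Jc 2 4 6 8 ∘ₗ S9 3 7 8 ∘ₗ S9 3 4 5 := by
  have braid := realizesBraidRelations hαβ hΞ hJ
  have S_vac {p : Fin 3 → Fin 9} (hp : p.Injective) := atPos_single_zero S₃_single_zero hp
  have J_vac {p : Fin 4 → Fin 9} (hp : p.Injective) := atPos_single_zero (J₄_single_zero hΞ hJ) hp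
  have reflection := braid.intertwines_left.eq_of_excites braid.intertwines_right
    (excites_simpleRep hαβ hα₃) (by decide)
    (by simp only [Module.End.mul_apply, S_vac, J_vac])
  iterate 4 rw [S9_eq_atPos _ _ _ (by decide)]
  iterate 3 rw [J9_eq_atPos _ _ _ _ _ (by decide)]
  exact reflection
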